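/- arXiv:2111.05292 — 2 statements merged into one kernel-verified Lean document; each statement's English description precedes it below -/
import Mathlib

section
/- There exists an absolute constant c > 0 with the following property. Let m, T, n, N be positive integers, let V_0, V_1, …, V_T be fixed unitary matrices in U(4m) (the unitary group of complex (4m)×(4m) matrices), and define the variational unitary circuit map F : U(4)^T → U(4m) by F(U_1,…,U_T) = V_T (U_T ⊗ I_m) V_{T−1} ⋯ V_1 (U_1 ⊗ I_m) V_0, where ⊗ denotes the Kronecker product and I_m the m×m identity. Let Z be a measurable space with probability measure μ, let ρ : Z → ℂ^{4m×4m} be a measurable map whose values are density matrices (positive semidefinite with trace 1), let C > 0, and let O : Z → ℂ^{4m×4m} be a measurable map whose values are Hermitian matrices with ℓ²-operator norm ‖O_z‖ ≤ C for all z. Define the loss ℓ(θ; z) = Re Tr(O_z · F(θ) · ρ(z) · F(θ)*), the true risk R(θ) = ∫ ℓ(θ; z) dμ(z), and, for a sample S = (z_1,…,z_N) ∈ Z^N, the empirical risk R̂_S(θ) = (1/N) Σ_{i=1}^N ℓ(θ; z_i). Then for every δ ∈ (0,1), with probability at least 1 − δ over S drawn from the N-fold product measure μ^{⊗N}, simultaneously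 for every θ ∈ U(4)^T one has R(θ) − R̂_S(θ) ≤ c · C · ( √(T(1 + log T)/N) + √(log(2/δ)/N) ). In particular this bound holds for any parameter setting θ* = θ*(S) returned by an optimization procedure run on the training data S. -/
open MeasureTheory Matrix
open scoped Kronecker ComplexOrder

/-- The ℓ²→ℓ² operator norm (spectral norm) of a complex square matrix. -/
noncomputable def opNorm {n : Type*} [Fintype n] [DecidableEq n] (A : Matrix n n ℂ) : ℝ :=
  ‖Matrix.toEuclideanCLM (𝕜 := ℂ) A‖

/-- The variational unitary circuit: `circuit V U T = V T * (U (T-1) ⊗ I) * ⋯ * (U 0 ⊗ I) * V 0`,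
i.e. `T` parameterized 2-qubit gates interleaved with fixed global unitaries on `ℂ^{4m}`. -/
noncomputable def circuit {m : ℕ} (V : ℕ → Matrix (Fin 4 × Fin m) (Fin 4 × Fin m) ℂ)
    (U : ℕ → Matrix (Fin 4) (Fin 4) ℂ) : ℕ → Matrix (Fin 4 × Fin m) (Fin 4 × Fin m) ℂ
  | 0 => V 0
  | (t + 1) => V (t + 1) * (U t ⊗ₖ (1 : Matrix (Fin m) (Fin m) ℂ)) * circuit V U t

/-- The loss `ℓ(θ; z) = Re Tr(O_z · F(θ) · ρ(z) · F(θ)*)`. -/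
noncomputable def qloss {m : ℕ} {Z : Type*}
    (V : ℕ → Matrix (Fin 4 × Fin m) (Fin 4 × Fin m) ℂ) (T : ℕ)
    (O ρ : Z → Matrix (Fin 4 × Fin m) (Fin 4 × Fin m) ℂ)
    (U : ℕ → Matrix (Fin 4) (Fin 4) ℂ) (z : Z) : ℝ :=
  ((O z * circuit V U T * ρ z * (circuit V U T)ᴴ).trace).re

/-!
The loss is `2C`-Lipschitz in the sum of the spectral-norm errors of the gates, because replacing
one gate inside a product of unitaries moves the product by at most the error of that gate.
Rounding the `32T` real entries of the gates to a grid of mesh `1/K` therefore changes the loss by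
`O(CT/K)`, so at scale `C/2^k` the class of losses has metric entropy `O(T(1 + log T)(k + 1))`.
Chaining through these dyadic scales, with Hoeffding's inequality and a union bound for the links of
level `k` at confidence `δ/2^(k+1)`, costs `(k + 1)/2^k` per level. These costs sum to a constant;
a single net at one scale would leave an extra `log N`.
-/

open ProbabilityTheory Filter Topology

section GeneralizationGap

variable {Z Θ : Type*} [MeasurableSpace Z] {μ : Measure Z} {N : ℕ}

/-- The generalization gap `∫ g dμ - (1/N) ∑ᵢ g(Sᵢ)` of a function `g` on a sample `S` of size `N`:
the amount by which the empirical mean underestimates the true mean. -/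
noncomputable def generalizationGap (μ : Measure Z) (g : Z → ℝ) (S : Fin N → Z) : ℝ :=
  (∫ z, g z ∂μ) - (1 / N) * ∑ i, g (S i)

theorem generalizationGap_zero (S : Fin N → Z) : generalizationGap μ 0 S = 0 := by
  simp [generalizationGap]

theorem generalizationGap_sub {f g : Z → ℝ} (hf : Integrable f μ) (hg : Integrable g μ)
    (S : Fin N → Z) :
    generalizationGap μ (f - g) S = generalizationGap μ f S - generalizationGap μ g S := by
  simp only [generalizationGap, Pi.sub_apply, integral_sub hf hg, Finset.sum_sub_distrib]
  ring

theorem generalizationGap_le_two_mul [IsProbabilityMeasure μ] {g : Z → ℝ} {ε : ℝ}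
    (hg : ∀ z, |g z| ≤ ε) (hN : 0 < N) (S : Fin N → Z) : generalizationGap μ g S ≤ 2 * ε := by
  have hN' : (0 : ℝ) < N := Nat.cast_pos.2 hN
  have hint : ∫ z, g z ∂μ ≤ ε := by
    have h : ‖∫ z, g z ∂μ‖ ≤ ε * μ.real Set.univ :=
      norm_integral_le_of_norm_le_const (.of_forall hg)
    rw [probReal_univ, mul_one] at h
    exact (le_abs_self _).trans h
  have hsum : -(N * ε) ≤ ∑ i, g (S i) := by
    simpa using Finset.card_nsmul_le_sum Finset.univ (fun i => g (S i)) (-ε)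
      fun i _ => (abs_le.1 (hg (S i))).1
  have hmean : -ε ≤ (1 / N) * ∑ i, g (S i) := by
    rw [one_div_mul_eq_div, le_div_iff₀ hN']
    linarith
  rw [generalizationGap]
  linarith

theorem le_generalizationGap_iff (hN : 0 < N) {g : Z → ℝ} {t : ℝ} {S : Fin N → Z} :
    t ≤ generalizationGap μ g S ↔ N * t ≤ ∑ i, (-g (S i) - ∫ z, -g z ∂μ) := by
  have hN' : (0 : ℝ) < N := Nat.cast_pos.2 hN
  simp only [generalizationGap, integral_neg, sub_neg_eq_add, Finset.sum_add_distrib,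
    Finset.sum_neg_distrib, Finset.sum_const, Finset.card_univ, Fintype.card_fin, nsmul_eq_mul]
  rw [← mul_le_mul_iff_right₀ hN', mul_sub, ← mul_assoc, mul_one_div_cancel hN'.ne', one_mul,
    sub_eq_neg_add]

theorem measure_le_generalizationGap_le [IsProbabilityMeasure μ] (hN : 0 < N) {g : Z → ℝ}
    (hg : Measurable g) {D : ℝ} (hb : ∀ z, |g z| ≤ D) {t : ℝ} (ht : 0 ≤ t) :
    (Measure.pi fun _ : Fin N => μ) {S | t ≤ generalizationGap μ g S} ≤
      ENNReal.ofReal (Real.exp (-(N * t ^ 2 / (2 * D ^ 2)))) := by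
  set X : Z → ℝ := fun z => -g z - ∫ z, -g z ∂μ
  have hX : HasSubgaussianMGF X ((‖D - -D‖₊ / 2) ^ 2) μ :=
    hasSubgaussianMGF_of_mem_Icc hg.neg.aemeasurable
      (.of_forall fun z => abs_le.1 ((abs_neg (g z)).trans_le (hb z)))
  have hsub (i : Fin N) : HasSubgaussianMGF (fun S : Fin N → Z => X (S i))
      ((‖D - -D‖₊ / 2) ^ 2) (Measure.pi fun _ => μ) := by
    have heval := measurePreserving_eval (fun _ : Fin N => μ) i
    exact .of_map heval.measurable.aemeasurable (heval.map_eq.symm ▸ hX)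
  have htail := HasSubgaussianMGF.measure_sum_ge_le_of_iIndepFun
    (iIndepFun_pi fun _ : Fin N => hX.aemeasurable) (s := Finset.univ) (fun i _ => hsub i)
    (ε := N * t) (by positivity)
  have hvar : (((‖D - -D‖₊ / 2) ^ 2 : NNReal) : ℝ) = D ^ 2 := by
    simp [← two_mul]
  simp only [le_generalizationGap_iff hN]
  rw [← ofReal_measureReal]
  refine ENNReal.ofReal_le_ofReal (htail.trans_eq (congrArg Real.exp ?_))
  simp only [Finset.sum_const, Finset.card_univ, Fintype.card_fin, nsmul_eq_mul, NNReal.coe_mul,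
    NNReal.coe_natCast, hvar]
  rcases eq_or_ne D 0 with rfl | hD
  · simp
  · field_simp

/-- `D * √(2 * r / N)` is the Hoeffding threshold at confidence `exp (-r)` for a single function. -/
theorem measure_exists_le_generalizationGap_le [IsProbabilityMeasure μ] (hN : 0 < N)
    {g : Θ → Z → ℝ} (hfin : (Set.range g).Finite) {h : ℝ}
    (hcard : ((Set.range g).ncard : ℝ) ≤ Real.exp h) (hg : ∀ θ, Measurable (g θ)) {D : ℝ}
    (hD : 0 < D) (hb : ∀ θ z, |g θ z| ≤ D) {r : ℝ} (hr : 0 ≤ r) :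
    (Measure.pi fun _ : Fin N => μ)
        {S | ∃ θ, D * Real.sqrt (2 * r / N) ≤ generalizationGap μ (g θ) S} ≤
      ENNReal.ofReal (Real.exp (h - r)) := by
  set P := Measure.pi fun _ : Fin N => μ
  set t : ℝ := D * Real.sqrt (2 * r / N)
  have hsingle : ∀ u ∈ hfin.toFinset,
      P {S | t ≤ generalizationGap μ u S} ≤ ENNReal.ofReal (Real.exp (-r)) := by
    intro u hu
    obtain ⟨θ, rfl⟩ := hfin.mem_toFinset.1 hu
    refine (measure_le_generalizationGap_le hN (hg θ) (hb θ) (by positivity)).trans_eq ?_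
    congr 3
    rw [mul_pow, Real.sq_sqrt (by positivity)]
    field_simp
  have hunion : {S : Fin N → Z | ∃ θ, t ≤ generalizationGap μ (g θ) S} =
      ⋃ u ∈ hfin.toFinset, {S | t ≤ generalizationGap μ u S} := by
    ext S
    simp
  calc P {S | ∃ θ, t ≤ generalizationGap μ (g θ) S}
      ≤ ∑ u ∈ hfin.toFinset, P {S | t ≤ generalizationGap μ u S} :=
        hunion ▸ measure_biUnion_finset_le _ _
    _ ≤ hfin.toFinset.card • ENNReal.ofReal (Real.exp (-r)) :=
        Finset.sum_le_card_nsmul _ _ _ hsingle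
    _ = ENNReal.ofReal ((Set.range g).ncard * Real.exp (-r)) := by
        rw [Set.ncard_eq_toFinset_card _ hfin, ENNReal.ofReal_mul (by positivity),
          ENNReal.ofReal_natCast, nsmul_eq_mul]
    _ ≤ ENNReal.ofReal (Real.exp (h - r)) := by
        rw [sub_eq_add_neg, Real.exp_add]
        gcongr

/-- Telescoping along the chain `a 0, a 1, …` reduces the gap of the limit to those of the links. -/
theorem generalizationGap_le_of_chain [IsProbabilityMeasure μ] (hN : 0 < N) {f : Z → ℝ}
    {a : ℕ → Z → ℝ} {ε t : ℕ → ℝ} {s : ℝ} (hf : Integrable f μ) (ha : ∀ k, Integrable (a k) μ)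
    (ha₀ : a 0 = 0) (hfa : ∀ k z, |f z - a k z| ≤ ε k) (hε : Tendsto ε atTop (𝓝 0))
    (ht : HasSum t s) (ht₀ : ∀ k, 0 ≤ t k) {S : Fin N → Z}
    (hlink : ∀ k, generalizationGap μ (a (k + 1) - a k) S ≤ t k) :
    generalizationGap μ f S ≤ s := by
  have hchain (n : ℕ) : generalizationGap μ (a n) S ≤ s := by
    calc generalizationGap μ (a n) S
        = ∑ k ∈ Finset.range n, generalizationGap μ (a (k + 1) - a k) S := by
          simp only [generalizationGap_sub (ha _) (ha _)]
          rw [Finset.sum_range_sub (fun k => generalizationGap μ (a k) S), ha₀,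
            generalizationGap_zero, sub_zero]
      _ ≤ ∑ k ∈ Finset.range n, t k := Finset.sum_le_sum fun k _ => hlink k
      _ ≤ s := sum_le_hasSum _ (fun k _ => ht₀ k) ht
  have happrox (n : ℕ) : generalizationGap μ f S ≤ s + 2 * ε n := by
    have h := generalizationGap_le_two_mul (μ := μ) (g := f - a n) (hfa n) hN S
    rw [generalizationGap_sub hf (ha n)] at h
    linarith [hchain n]
  have hlim : Tendsto (fun n => s + 2 * ε n) atTop (𝓝 s) := by
    simpa using (hε.const_mul 2).const_add s
  exact ge_of_tendsto' hlim happrox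

end GeneralizationGap

section Chaining

open scoped Pointwise

theorem range_sub_subset {α β : Type*} [Sub β] (a b : α → β) :
    Set.range (a - b) ⊆ Set.range a - Set.range b := by
  rintro _ ⟨x, rfl⟩
  exact Set.sub_mem_sub ⟨x, rfl⟩ ⟨x, rfl⟩

variable {Z Θ : Type*} [MeasurableSpace Z] {f a b : Θ → Z → ℝ} {ε ε' h h' : ℝ}

/-- `a` is a uniform `ε`-net of the function class `f`, assigning to each parameter one of at most
`exp h` measurable functions: the metric entropy of `f` at scale `ε` is at most `h`. -/
structure IsUniformNet (f a : Θ → Z → ℝ) (ε h : ℝ) : Prop where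
  measurable : ∀ θ, Measurable (a θ)
  finite : (Set.range a).Finite
  ncard_le : ((Set.range a).ncard : ℝ) ≤ Real.exp h
  dist_le : ∀ θ z, |f θ z - a θ z| ≤ ε

namespace IsUniformNet

theorem mono (ha : IsUniformNet f a ε h) (hε : ε ≤ ε') (hh : h ≤ h') : IsUniformNet f a ε' h' where
  measurable := ha.measurable
  finite := ha.finite
  ncard_le := ha.ncard_le.trans (Real.exp_le_exp.2 hh)
  dist_le θ z := (ha.dist_le θ z).trans hε

theorem zero_of_abs_le (hf : ∀ θ z, |f θ z| ≤ ε) : IsUniformNet f 0 ε 0 where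
  measurable _ := measurable_const
  finite := (Set.finite_singleton 0).subset Set.range_const_subset
  ncard_le := by
    have hcard := Set.ncard_le_ncard (Set.range_const_subset (ι := Θ) (c := (0 : Z → ℝ)))
    rw [Set.ncard_singleton] at hcard
    rw [Real.exp_zero]
    exact_mod_cast hcard
  dist_le θ z := by simpa using hf θ z

theorem finite_range_sub (ha : IsUniformNet f a ε h) (hb : IsUniformNet f b ε' h') :
    (Set.range (a - b)).Finite :=
  (ha.finite.sub hb.finite).subset (range_sub_subset a b)

theorem ncard_range_sub_le (ha : IsUniformNet f a ε h) (hb : IsUniformNet f b ε' h') :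
    ((Set.range (a - b)).ncard : ℝ) ≤ Real.exp (h + h') := by
  have hcard : (Set.range (a - b)).ncard ≤ (Set.range a).ncard * (Set.range b).ncard :=
    (Set.ncard_le_ncard (range_sub_subset a b) (ha.finite.sub hb.finite)).trans Set.natCard_sub_le
  calc ((Set.range (a - b)).ncard : ℝ) ≤ (Set.range a).ncard * (Set.range b).ncard := by
        exact_mod_cast hcard
    _ ≤ Real.exp h * Real.exp h' := by
        gcongr
        exacts [ha.ncard_le, hb.ncard_le]
    _ = Real.exp (h + h') := (Real.exp_add _ _).symm

theorem abs_sub_le (ha : IsUniformNet f a ε h) (hb : IsUniformNet f b ε' h') (θ : Θ) (z : Z) :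
    |(a - b) θ z| ≤ ε + ε' := by
  have hle := (_root_.abs_sub_le (a θ z) (f θ z) (b θ z)).trans
    (add_le_add ((abs_sub_comm _ _).trans_le (ha.dist_le θ z)) (hb.dist_le θ z))
  exact hle

end IsUniformNet

theorem hasSum_succ_mul_geometric {r : ℝ} (hr : ‖r‖ < 1) :
    HasSum (fun k : ℕ => (k + 1 : ℝ) * r ^ k) (1 / (1 - r) ^ 2) := by
  simpa using hasSum_choose_mul_geometric_of_norm_lt_one 1 hr

theorem ofReal_one_sub_le_measure_of_compl_subset_iUnion {Ω : Type*} [MeasurableSpace Ω]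
    {P : Measure Ω} [IsProbabilityMeasure P] {s : Set Ω} {B : ℕ → Set Ω} {p : ℕ → ℝ} {δ : ℝ}
    (hs : sᶜ ⊆ ⋃ k, B k) (hp₀ : ∀ k, 0 ≤ p k) (hp : HasSum p δ)
    (hB : ∀ k, P (B k) ≤ ENNReal.ofReal (p k)) :
    ENNReal.ofReal (1 - δ) ≤ P s := by
  have hcompl : P sᶜ ≤ ENNReal.ofReal δ :=
    calc P sᶜ ≤ ∑' k, P (B k) := (measure_mono hs).trans (measure_iUnion_le _)
      _ ≤ ∑' k, ENNReal.ofReal (p k) := ENNReal.tsum_le_tsum hB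
      _ = ENNReal.ofReal δ := by
        rw [← ENNReal.ofReal_tsum_of_nonneg hp₀ hp.summable, hp.tsum_eq]
  rw [ENNReal.ofReal_sub _ (hp.nonneg hp₀), ENNReal.ofReal_one, tsub_le_iff_right,
    ← measure_univ (μ := P)]
  exact (measure_univ_le_add_compl s).trans (by gcongr)

theorem sqrt_two_mul_succ_mul_le {x y : ℝ} (hx : 0 ≤ x) (hy : 0 ≤ y) (k : ℕ) :
    Real.sqrt (2 * ((k + 1) * (2 * x + y))) ≤ 2 * (k + 1) * (Real.sqrt x + Real.sqrt y) := by
  have hxy : x + y ≤ (Real.sqrt x + Real.sqrt y) ^ 2 := by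
    have hcross : 0 ≤ 2 * Real.sqrt x * Real.sqrt y := by positivity
    rw [add_sq, Real.sq_sqrt hx, Real.sq_sqrt hy]
    linarith
  have hk : (1 : ℝ) ≤ k + 1 := le_add_of_nonneg_left k.cast_nonneg
  refine Real.sqrt_le_iff.2 ⟨by positivity, ?_⟩
  calc 2 * ((k + 1) * (2 * x + y)) ≤ 2 * ((k + 1) * (2 * (x + y))) := by gcongr; linarith
    _ = 2 ^ 2 * ((k + 1) * 1) * (x + y) := by ring
    _ ≤ 2 ^ 2 * ((k + 1) * (k + 1)) * (Real.sqrt x + Real.sqrt y) ^ 2 := by gcongr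
    _ = (2 * (k + 1) * (Real.sqrt x + Real.sqrt y)) ^ 2 := by ring

variable {μ : Measure Z} [IsProbabilityMeasure μ] {N : ℕ} {D H δ : ℝ}

/-- The links of the chain at level `k`, of which there are `exp (O(H * (k + 1)))` of size
`O(D / 2 ^ k)`, exceed their allotted share of the deviation with probability `δ / 2 ^ (k + 1)`. -/
theorem measure_exists_link_le (hN : 0 < N) (hD : 0 < D) (hH : 0 ≤ H) (hδ : 0 < δ) (hδ₁ : δ ≤ 1)
    {k : ℕ} (ha : IsUniformNet f a (D * (1 / 2) ^ k) (H * k))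
    (hb : IsUniformNet f b (D * (1 / 2) ^ (k + 1)) (H * (k + 1))) :
    (Measure.pi fun _ : Fin N => μ) {S | ∃ θ,
        3 * D * (Real.sqrt (H / N) + Real.sqrt (Real.log (2 / δ) / N)) *
          ((k + 1) * (1 / 2) ^ k) < generalizationGap μ (b θ - a θ) S} ≤
      ENNReal.ofReal (δ / 2 * (1 / 2) ^ k) := by
  have hlog : 0 ≤ Real.log (2 / δ) := Real.log_nonneg ((one_le_div hδ).2 (by linarith))
  set L := Real.log (2 / δ)
  set r : ℝ := (k + 1) * (2 * H + L) with hr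
  have hthreshold : 3 / 2 * D * (1 / 2) ^ k * Real.sqrt (2 * r / N) ≤
      3 * D * (Real.sqrt (H / N) + Real.sqrt (L / N)) * ((k + 1) * (1 / 2) ^ k) := by
    have hsqrt := sqrt_two_mul_succ_mul_le (x := H / N) (y := L / N) (by positivity)
      (by positivity) k
    rw [show 2 * ((k + 1) * (2 * (H / N) + L / N)) = 2 * r / N by rw [hr]; ring] at hsqrt
    calc _ ≤ 3 / 2 * D * (1 / 2) ^ k *
          (2 * (k + 1) * (Real.sqrt (H / N) + Real.sqrt (L / N))) := by gcongr
      _ = _ := by ring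
  have hprob : Real.exp (H * (k + 1) + H * k - r) ≤ δ / 2 * (1 / 2) ^ k :=
    calc Real.exp (H * (k + 1) + H * k - r) ≤ Real.exp ((k + 1 : ℕ) * -L) := by
          gcongr
          rw [hr]
          push_cast
          linarith
      _ = (δ / 2) ^ (k + 1) := by
          rw [Real.exp_nat_mul, Real.exp_neg, Real.exp_log (by positivity), inv_div]
      _ ≤ δ / 2 * (1 / 2) ^ k := by
          rw [pow_succ']
          gcongr
  have hunion := measure_exists_le_generalizationGap_le (μ := μ) hN (hb.finite_range_sub ha)
    (hb.ncard_range_sub_le ha) (fun θ => (hb.measurable θ).sub (ha.measurable θ))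
    (D := 3 / 2 * D * (1 / 2) ^ k) (by positivity)
    (fun θ z => (hb.abs_sub_le ha θ z).trans_eq (by ring)) (r := r) (by positivity)
  refine (measure_mono ?_).trans (hunion.trans (ENNReal.ofReal_le_ofReal hprob))
  rintro S ⟨θ, hθ⟩
  exact ⟨θ, hthreshold.trans hθ.le⟩

/-- A Dudley-type chaining bound; the constant is `12 = 3 * ∑ k, (k + 1) / 2 ^ k`. -/
theorem ofReal_one_sub_le_measure_generalizationGap_le (hN : 0 < N) (hD : 0 < D) (hH : 0 ≤ H)
    (hδ : 0 < δ) (hδ₁ : δ ≤ 1) (hf : ∀ θ, Measurable (f θ)) (hfD : ∀ θ z, |f θ z| ≤ D)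
    (hnet : ∀ k : ℕ, ∃ a, IsUniformNet f a (D * (1 / 2) ^ (k + 1)) (H * (k + 1))) :
    ENNReal.ofReal (1 - δ) ≤ (Measure.pi fun _ : Fin N => μ) {S | ∀ θ,
      generalizationGap μ (f θ) S ≤
        12 * D * (Real.sqrt (H / N) + Real.sqrt (Real.log (2 / δ) / N))} := by
  choose net hnet using hnet
  let a : ℕ → Θ → Z → ℝ := fun k => Nat.casesOn k 0 net
  have ha : ∀ k, IsUniformNet f (a k) (D * (1 / 2) ^ k) (H * k)
    | 0 => by simpa [a] using IsUniformNet.zero_of_abs_le hfD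
    | k + 1 => by simpa [a] using hnet k
  set E := Real.sqrt (H / N) + Real.sqrt (Real.log (2 / δ) / N)
  set t : ℕ → ℝ := fun k => 3 * D * E * ((k + 1) * (1 / 2) ^ k)
  have ht : HasSum t (12 * D * E) := by
    have h := (hasSum_succ_mul_geometric (r := 1 / 2) (by norm_num)).mul_left (3 * D * E)
    rwa [show 3 * D * E * (1 / (1 - 1 / 2) ^ 2) = 12 * D * E by ring] at h
  have hδsum : HasSum (fun k : ℕ => δ / 2 * (1 / 2) ^ k) δ := by
    simpa using hasSum_geometric_two.mul_left (δ / 2)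
  refine ofReal_one_sub_le_measure_of_compl_subset_iUnion
    (B := fun k => {S | ∃ θ, t k < generalizationGap μ (a (k + 1) θ - a k θ) S}) ?_
    (fun k => by positivity) hδsum fun k => measure_exists_link_le hN hD hH hδ hδ₁ (ha k) (hnet k)
  rw [Set.compl_subset_comm]
  intro S hS θ
  simp only [Set.mem_compl_iff, Set.mem_iUnion, Set.mem_ofPred_eq, not_exists, not_lt] at hS
  have hscale : Tendsto (fun k => D * (1 / 2 : ℝ) ^ k) atTop (𝓝 0) := by
    simpa using (tendsto_pow_atTop_nhds_zero_of_lt_one (r := (1 / 2 : ℝ)) (by norm_num)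
      (by norm_num)).const_mul D
  have hfint : Integrable (f θ) μ :=
    .of_bound (hf θ).aestronglyMeasurable D (.of_forall (hfD θ))
  have haint (k : ℕ) : Integrable (a k θ) μ := by
    have hdiff : Integrable (f θ - a k θ) μ := .of_bound
      ((hf θ).sub ((ha k).measurable θ)).aestronglyMeasurable _ (.of_forall ((ha k).dist_le θ))
    simpa using hfint.sub hdiff
  exact generalizationGap_le_of_chain (a := fun k => a k θ) hN hfint haint rfl
    (fun k => (ha k).dist_le θ) hscale ht (fun k => by positivity) fun k => hS k θ

end Chaining

section MatrixNorm

open scoped Matrix.Norms.L2Operator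

variable {𝕜 n l : Type*} [RCLike 𝕜] [Fintype n] [DecidableEq n] [Fintype l] [DecidableEq l]

theorem opNorm_eq_norm (A : Matrix n n ℂ) : opNorm A = ‖A‖ := rfl

theorem norm_star_dotProduct_mulVec_le (A : Matrix n n 𝕜) (v : n → 𝕜) :
    ‖star v ⬝ᵥ A *ᵥ v‖ ≤ ‖A‖ * RCLike.re (star v ⬝ᵥ v) := by
  set x : EuclideanSpace 𝕜 n := WithLp.toLp 2 v
  have hAv : inner 𝕜 x (toEuclideanCLM (𝕜 := 𝕜) A x) = star v ⬝ᵥ A *ᵥ v := by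
    rw [dotProduct_comm]; rfl
  have hv : RCLike.re (star v ⬝ᵥ v) = ‖x‖ * ‖x‖ := by
    rw [← inner_self_eq_norm_mul_norm (𝕜 := 𝕜), dotProduct_comm]; rfl
  calc ‖star v ⬝ᵥ A *ᵥ v‖ = ‖inner 𝕜 x (toEuclideanCLM (𝕜 := 𝕜) A x)‖ := by rw [hAv]
    _ ≤ ‖x‖ * (‖A‖ * ‖x‖) := (norm_inner_le_norm _ _).trans (by gcongr; exact l2_opNorm_mulVec A x)
    _ = ‖A‖ * RCLike.re (star v ⬝ᵥ v) := by rw [hv]; ring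

theorem norm_trace_mul_le_of_posSemidef (A : Matrix n n 𝕜) {ρ : Matrix n n 𝕜}
    (hρ : ρ.PosSemidef) : ‖(A * ρ).trace‖ ≤ ‖A‖ * RCLike.re ρ.trace := by
  obtain ⟨k, v, rfl⟩ := posSemidef_iff_eq_sum_vecMulVec.1 hρ
  simp only [trace_sum, mul_vecMulVec, trace_vecMulVec, map_sum, Finset.mul_sum]
  refine norm_sum_le_of_le _ fun i _ => ?_
  rw [dotProduct_comm, dotProduct_comm (v i)]
  exact norm_star_dotProduct_mulVec_le A (v i)

theorem norm_trace_mul_mul_mul_conjTranspose_le (O F G : Matrix n n 𝕜) {ρ : Matrix n n 𝕜}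
    (hρ : ρ.PosSemidef) :
    ‖(O * F * ρ * Gᴴ).trace‖ ≤ ‖O‖ * ‖F‖ * ‖G‖ * RCLike.re ρ.trace := by
  have htr : 0 ≤ RCLike.re ρ.trace := (RCLike.nonneg_iff.1 hρ.trace_nonneg).1
  calc ‖(O * F * ρ * Gᴴ).trace‖ = ‖(Gᴴ * (O * F) * ρ).trace‖ := by
        rw [trace_mul_comm, ← Matrix.mul_assoc]
    _ ≤ ‖Gᴴ * (O * F)‖ * RCLike.re ρ.trace := norm_trace_mul_le_of_posSemidef _ hρ
    _ ≤ ‖Gᴴ‖ * (‖O‖ * ‖F‖) * RCLike.re ρ.trace := by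
        gcongr
        exact (norm_mul_le _ _).trans (by gcongr; exact norm_mul_le _ _)
    _ = ‖O‖ * ‖F‖ * ‖G‖ * RCLike.re ρ.trace := by rw [l2_opNorm_conjTranspose]; ring

theorem norm_trace_sub_trace_le (O : Matrix n n 𝕜) {F G ρ : Matrix n n 𝕜} (hF : ‖F‖ ≤ 1)
    (hG : ‖G‖ ≤ 1) (hρ : ρ.PosSemidef) (htr : ρ.trace = 1) :
    ‖(O * F * ρ * Fᴴ).trace - (O * G * ρ * Gᴴ).trace‖ ≤ 2 * ‖O‖ * ‖F - G‖ := by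
  have hsplit : (O * F * ρ * Fᴴ).trace - (O * G * ρ * Gᴴ).trace =
      (O * (F - G) * ρ * Fᴴ).trace + (O * G * ρ * (F - G)ᴴ).trace := by
    rw [← trace_sub, ← trace_add, conjTranspose_sub]
    congr 1
    noncomm_ring
  have hleft := norm_trace_mul_mul_mul_conjTranspose_le O (F - G) F hρ
  have hright := norm_trace_mul_mul_mul_conjTranspose_le O G (F - G) hρ
  rw [htr, RCLike.one_re, mul_one] at hleft hright
  calc ‖(O * F * ρ * Fᴴ).trace - (O * G * ρ * Gᴴ).trace‖
      ≤ ‖O‖ * ‖F - G‖ * ‖F‖ + ‖O‖ * ‖G‖ * ‖F - G‖ :=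
        hsplit ▸ norm_add_le_of_le hleft hright
    _ ≤ ‖O‖ * ‖F - G‖ * 1 + ‖O‖ * 1 * ‖F - G‖ := by gcongr
    _ = 2 * ‖O‖ * ‖F - G‖ := by ring

theorem norm_le_one_of_mem_unitaryGroup {U : Matrix n n 𝕜} (hU : U ∈ unitaryGroup n 𝕜) :
    ‖U‖ ≤ 1 := by
  cases isEmpty_or_nonempty n
  · simp [Subsingleton.elim U 0]
  · exact (CStarRing.norm_of_mem_unitary hU).le

theorem norm_single (i : n) (j : l) (a : 𝕜) : ‖Matrix.single i j a‖ = ‖a‖ := by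
  have h := l2_opNorm_conjTranspose_mul_self (Matrix.single i j a)
  rw [conjTranspose_single, single_mul_single_same, ← diagonal_single, l2_opNorm_diagonal,
    Pi.norm_single, norm_mul, norm_star] at h
  exact ((mul_self_inj (norm_nonneg _) (norm_nonneg _)).1 h).symm

theorem norm_le_sum_norm_entries {p : Type*} [Fintype p] (A : Matrix p n 𝕜) :
    ‖A‖ ≤ ∑ i, ∑ j, ‖A i j‖ := by
  classical
  conv_lhs => rw [matrix_eq_sum_single A]
  exact norm_sum_le_of_le _ fun i _ => norm_sum_le_of_le _ fun j _ => (norm_single i j _).le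

variable (𝕜 n l) in
/-- Tensoring with the identity, `A ↦ A ⊗ I`, as a star homomorphism: being one, it is contractive
for the spectral norm and preserves unitarity. -/
noncomputable def kroneckerOneHom : Matrix n n 𝕜 →⋆ₐ[𝕜] Matrix (n × l) (n × l) 𝕜 where
  toFun A := A ⊗ₖ (1 : Matrix l l 𝕜)
  map_one' := one_kronecker_one
  map_mul' A B := by rw [← mul_kronecker_mul, one_mul]
  map_zero' := zero_kronecker _
  map_add' A B := add_kronecker _ _ _
  commutes' r := by simp [Algebra.algebraMap_eq_smul_one, smul_kronecker]
  map_star' A := by simp [star_eq_conjTranspose, conjTranspose_kronecker]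

theorem kronecker_one_mem_unitaryGroup {U : Matrix n n 𝕜} (hU : U ∈ unitaryGroup n 𝕜) :
    U ⊗ₖ (1 : Matrix l l 𝕜) ∈ unitaryGroup (n × l) 𝕜 :=
  Unitary.map_mem (kroneckerOneHom 𝕜 n l) hU

theorem norm_kronecker_one_sub_kronecker_one_le (A B : Matrix n n ℂ) :
    ‖A ⊗ₖ (1 : Matrix l l ℂ) - B ⊗ₖ (1 : Matrix l l ℂ)‖ ≤ ‖A - B‖ := by
  refine (congrArg norm (map_sub (kroneckerOneHom ℂ n l) A B)).symm.trans_le ?_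
  exact NonUnitalStarAlgHom.norm_apply_le (kroneckerOneHom ℂ n l) (A - B)

end MatrixNorm

section Circuit

open scoped Matrix.Norms.L2Operator

variable {m T : ℕ} {V : ℕ → Matrix (Fin 4 × Fin m) (Fin 4 × Fin m) ℂ}
  {U W : ℕ → Matrix (Fin 4) (Fin 4) ℂ}

theorem circuit_mem_unitaryGroup (hV : ∀ s ≤ T, V s ∈ unitaryGroup (Fin 4 × Fin m) ℂ)
    (hU : ∀ t < T, U t ∈ unitaryGroup (Fin 4) ℂ) :
    circuit V U T ∈ unitaryGroup (Fin 4 × Fin m) ℂ := by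
  induction T with
  | zero => exact hV 0 le_rfl
  | succ T ih =>
    exact mul_mem (mul_mem (hV _ le_rfl) (kronecker_one_mem_unitaryGroup (hU T T.lt_succ_self)))
      (ih (fun s hs => hV s (hs.trans T.le_succ)) fun t ht => hU t (ht.trans T.lt_succ_self))

theorem norm_circuit_sub_circuit_le (hV : ∀ s ≤ T, V s ∈ unitaryGroup (Fin 4 × Fin m) ℂ)
    (hU : ∀ t < T, U t ∈ unitaryGroup (Fin 4) ℂ) (hW : ∀ t < T, W t ∈ unitaryGroup (Fin 4) ℂ) :
    ‖circuit V U T - circuit V W T‖ ≤ ∑ t ∈ Finset.range T, ‖U t - W t‖ := by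
  induction T with
  | zero => simp [circuit]
  | succ T ih =>
    have hV' : ∀ s ≤ T, V s ∈ unitaryGroup (Fin 4 × Fin m) ℂ :=
      fun s hs => hV s (hs.trans T.le_succ)
    have hU' : ∀ t < T, U t ∈ unitaryGroup (Fin 4) ℂ := fun t ht => hU t (ht.trans T.lt_succ_self)
    have hW' : ∀ t < T, W t ∈ unitaryGroup (Fin 4) ℂ := fun t ht => hW t (ht.trans T.lt_succ_self)
    set A := U T ⊗ₖ (1 : Matrix (Fin m) (Fin m) ℂ)
    set B := W T ⊗ₖ (1 : Matrix (Fin m) (Fin m) ℂ)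
    have hsplit : circuit V U (T + 1) - circuit V W (T + 1) =
        V (T + 1) * ((A - B) * circuit V U T + B * (circuit V U T - circuit V W T)) := by
      simp only [circuit, A, B]
      noncomm_ring
    have hVn : ‖V (T + 1)‖ ≤ 1 := norm_le_one_of_mem_unitaryGroup (hV _ le_rfl)
    have hF : ‖circuit V U T‖ ≤ 1 :=
      norm_le_one_of_mem_unitaryGroup (circuit_mem_unitaryGroup hV' hU')
    have hB : ‖B‖ ≤ 1 :=
      norm_le_one_of_mem_unitaryGroup (kronecker_one_mem_unitaryGroup (hW T T.lt_succ_self))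
    calc ‖circuit V U (T + 1) - circuit V W (T + 1)‖
        ≤ ‖V (T + 1)‖ * (‖A - B‖ * ‖circuit V U T‖ + ‖B‖ * ‖circuit V U T - circuit V W T‖) := by
          rw [hsplit]
          refine (norm_mul_le _ _).trans ?_
          gcongr
          exact norm_add_le_of_le (norm_mul_le _ _) (norm_mul_le _ _)
      _ ≤ 1 * (‖U T - W T‖ * 1 + 1 * ∑ t ∈ Finset.range T, ‖U t - W t‖) := by
          gcongr
          · exact norm_kronecker_one_sub_kronecker_one_le _ _
          · exact ih hV' hU' hW'
      _ = ∑ t ∈ Finset.range (T + 1), ‖U t - W t‖ := by rw [Finset.sum_range_succ]; ring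

variable {Z : Type*} {O ρ : Z → Matrix (Fin 4 × Fin m) (Fin 4 × Fin m) ℂ} {z : Z}

theorem abs_qloss_le (hV : ∀ s ≤ T, V s ∈ unitaryGroup (Fin 4 × Fin m) ℂ)
    (hU : ∀ t < T, U t ∈ unitaryGroup (Fin 4) ℂ) (hρ : (ρ z).PosSemidef)
    (htr : (ρ z).trace = 1) : |qloss V T O ρ U z| ≤ opNorm (O z) := by
  set F := circuit V U T
  have hF : ‖F‖ ≤ 1 := norm_le_one_of_mem_unitaryGroup (circuit_mem_unitaryGroup hV hU)
  have htrace := norm_trace_mul_mul_mul_conjTranspose_le (O z) F F hρ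
  rw [htr, RCLike.one_re, mul_one] at htrace
  calc |qloss V T O ρ U z| ≤ ‖(O z * F * ρ z * Fᴴ).trace‖ := Complex.abs_re_le_norm _
    _ ≤ ‖O z‖ * 1 * 1 := htrace.trans (by gcongr)
    _ = opNorm (O z) := by rw [mul_one, mul_one, opNorm_eq_norm]

theorem abs_qloss_sub_qloss_le (hV : ∀ s ≤ T, V s ∈ unitaryGroup (Fin 4 × Fin m) ℂ)
    (hU : ∀ t < T, U t ∈ unitaryGroup (Fin 4) ℂ) (hW : ∀ t < T, W t ∈ unitaryGroup (Fin 4) ℂ)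
    (hρ : (ρ z).PosSemidef) (htr : (ρ z).trace = 1) :
    |qloss V T O ρ U z - qloss V T O ρ W z| ≤
      2 * opNorm (O z) * ∑ t ∈ Finset.range T, ‖U t - W t‖ := by
  rw [qloss, qloss, ← Complex.sub_re]
  calc _ ≤ _ := Complex.abs_re_le_norm _
    _ ≤ 2 * ‖O z‖ * ‖circuit V U T - circuit V W T‖ :=
        norm_trace_sub_trace_le (O z)
          (norm_le_one_of_mem_unitaryGroup (circuit_mem_unitaryGroup hV hU))
          (norm_le_one_of_mem_unitaryGroup (circuit_mem_unitaryGroup hV hW)) hρ htr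
    _ ≤ 2 * ‖O z‖ * ∑ t ∈ Finset.range T, ‖U t - W t‖ := by
        gcongr
        exact norm_circuit_sub_circuit_le hV hU hW

theorem measurable_qloss [MeasurableSpace Z] (hO : ∀ p q, Measurable fun z => O z p q)
    (hρ : ∀ p q, Measurable fun z => ρ z p q) : Measurable (qloss V T O ρ U) := by
  refine Complex.measurable_re.comp ?_
  simp only [trace, diag, mul_apply]
  fun_prop

end Circuit

section Quantization

variable {Θ ι : Type*}

theorem exists_finite_range_of_code {β : Type*} [Finite β] (code : Θ → β) :
    ∃ π : Θ → Θ, (Set.range π).Finite ∧ (Set.range π).ncard ≤ Nat.card β ∧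
      ∀ θ, code (π θ) = code θ := by
  have hsub : Set.range (Set.rangeSplitting code ∘ Set.rangeFactorization code) ⊆
      Set.range (Set.rangeSplitting code) := Set.range_comp_subset_range _ _
  refine ⟨_, (Set.finite_range _).subset hsub, ?_, fun θ => Set.apply_rangeSplitting code _⟩
  calc _ ≤ (Set.range (Set.rangeSplitting code)).ncard :=
        Set.ncard_le_ncard hsub (Set.finite_range _)
    _ ≤ Nat.card (Set.range code) := Finite.card_range_le _
    _ ≤ Nat.card β := Finite.card_subtype_le _

theorem exists_quantization [Fintype ι] {K : ℕ} (hK : 0 < K) {x : Θ → ι → ℝ}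
    (hx : ∀ θ i, |x θ i| ≤ 1) :
    ∃ π : Θ → Θ, (Set.range π).Finite ∧
      (Set.range π).ncard ≤ (2 * K + 1) ^ Fintype.card ι ∧
      ∀ θ i, |x θ i - x (π θ) i| ≤ 1 / K := by
  have hK' : (0 : ℝ) < K := Nat.cast_pos.2 hK
  have hfloor (θ : Θ) (i : ι) : ⌊x θ i * K⌋ ∈ Finset.Icc (-(K : ℤ)) K := by
    obtain ⟨hlower, hupper⟩ := abs_le.1 (hx θ i)
    refine Finset.mem_Icc.2 ⟨Int.le_floor.2 ?_, Int.floor_le_iff.2 ?_⟩ <;> push_cast <;> nlinarith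
  let code : Θ → ι → Finset.Icc (-(K : ℤ)) K := fun θ i => ⟨⌊x θ i * K⌋, hfloor θ i⟩
  obtain ⟨π, hfin, hcard, hπ⟩ := exists_finite_range_of_code code
  refine ⟨π, hfin, hcard.trans_eq ?_, fun θ i => ?_⟩
  · rw [Nat.card_fun, Nat.card_eq_fintype_card, Nat.card_eq_fintype_card, Fintype.card_coe,
      Int.card_Icc]
    congr 1
    omega
  · have hcell : ⌊x θ i * K⌋ = ⌊x (π θ) i * K⌋ := congrArg Subtype.val (congrFun (hπ θ) i).symm
    have hlt := (Int.abs_sub_lt_one_of_floor_eq_floor hcell).le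
    rwa [← sub_mul, abs_mul, abs_of_pos hK', ← le_div_iff₀ hK'] at hlt

theorem exists_complex_quantization [Fintype ι] {K : ℕ} (hK : 0 < K) {x : Θ → ι → ℂ}
    (hx : ∀ θ i, ‖x θ i‖ ≤ 1) :
    ∃ π : Θ → Θ, (Set.range π).Finite ∧
      (Set.range π).ncard ≤ (2 * K + 1) ^ (2 * Fintype.card ι) ∧
      ∀ θ i, ‖x θ i - x (π θ) i‖ ≤ 2 / K := by
  obtain ⟨π, hfin, hcard, hπ⟩ := exists_quantization hK
    (x := fun θ => Sum.elim (fun i => (x θ i).re) fun i => (x θ i).im) (by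
      rintro θ (i | i)
      exacts [(Complex.abs_re_le_norm _).trans (hx θ i), (Complex.abs_im_le_norm _).trans (hx θ i)])
  rw [Fintype.card_sum, ← two_mul] at hcard
  refine ⟨π, hfin, hcard, fun θ i => ?_⟩
  calc ‖x θ i - x (π θ) i‖ ≤ |(x θ i - x (π θ) i).re| + |(x θ i - x (π θ) i).im| :=
        Complex.norm_le_abs_re_add_abs_im _
    _ ≤ 1 / K + 1 / K := add_le_add (hπ θ (.inl i)) (hπ θ (.inr i))
    _ = 2 / K := by ring

end Quantization

section MetricEntropy

open scoped Matrix.Norms.L2Operator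

/-- The parameter space `U(4)^T` of the circuit, encoded as sequences of gates of which only the
first `T` are constrained. -/
abbrev UnitaryGates (T : ℕ) : Type :=
  {U : ℕ → Matrix (Fin 4) (Fin 4) ℂ // ∀ t < T, U t ∈ unitaryGroup (Fin 4) ℂ}

theorem exists_gate_quantization (T : ℕ) {K : ℕ} (hK : 0 < K) :
    ∃ π : UnitaryGates T → UnitaryGates T, (Set.range π).Finite ∧
      (Set.range π).ncard ≤ (2 * K + 1) ^ (32 * T) ∧
      ∀ U, ∀ t < T, ‖U.1 t - (π U).1 t‖ ≤ 32 / K := by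
  obtain ⟨π, hfin, hcard, hπ⟩ := exists_complex_quantization hK
    (x := fun (U : UnitaryGates T) (p : Fin T × Fin 4 × Fin 4) => U.1 p.1 p.2.1 p.2.2)
    fun U p => entry_norm_bound_of_unitary (U.2 p.1 p.1.2) _ _
  have hdim : 2 * Fintype.card (Fin T × Fin 4 × Fin 4) = 32 * T := by
    simp only [Fintype.card_prod, Fintype.card_fin]
    ring
  refine ⟨π, hfin, hdim ▸ hcard, fun U t ht => ?_⟩
  calc ‖U.1 t - (π U).1 t‖ ≤ ∑ i, ∑ j, ‖(U.1 t - (π U).1 t) i j‖ := norm_le_sum_norm_entries _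
    _ ≤ ∑ _i : Fin 4, ∑ _j : Fin 4, (2 / K : ℝ) :=
        Finset.sum_le_sum fun i _ => Finset.sum_le_sum fun j _ => hπ U (⟨t, ht⟩, i, j)
    _ = 32 / K := by
        simp only [Finset.sum_const, Finset.card_univ, Fintype.card_fin, nsmul_eq_mul]
        push_cast
        ring

variable {m T : ℕ} {V : ℕ → Matrix (Fin 4 × Fin m) (Fin 4 × Fin m) ℂ} {Z : Type*}
  [MeasurableSpace Z] {O ρ : Z → Matrix (Fin 4 × Fin m) (Fin 4 × Fin m) ℂ} {C : ℝ}

theorem exists_isUniformNet_qloss {K : ℕ} (hK : 0 < K)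
    (hV : ∀ s ≤ T, V s ∈ unitaryGroup (Fin 4 × Fin m) ℂ)
    (hρm : ∀ p q, Measurable fun z => ρ z p q) (hρ : ∀ z, (ρ z).PosSemidef ∧ (ρ z).trace = 1)
    (hOm : ∀ p q, Measurable fun z => O z p q) (hO : ∀ z, opNorm (O z) ≤ C) :
    ∃ a, IsUniformNet (fun U : UnitaryGates T => qloss V T O ρ U.1) a
      (64 * C * T / K) (32 * T * Real.log (2 * K + 1)) := by
  obtain ⟨π, hfin, hcard, hπ⟩ := exists_gate_quantization T hK
  set f : UnitaryGates T → Z → ℝ := fun U => qloss V T O ρ U.1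
  refine ⟨f ∘ π, fun U => measurable_qloss hOm hρm, ?_, ?_, fun U z => ?_⟩
  · rw [Set.range_comp]
    exact hfin.image f
  · have hncard : (Set.range (f ∘ π)).ncard ≤ (2 * K + 1) ^ (32 * T) := by
      rw [Set.range_comp]
      exact (Set.ncard_image_le hfin).trans hcard
    calc ((Set.range (f ∘ π)).ncard : ℝ) ≤ (2 * K + 1) ^ (32 * T) := by exact_mod_cast hncard
      _ = Real.exp (32 * T * Real.log (2 * K + 1)) := by
        rw [← Real.exp_log (show (0 : ℝ) < (2 * K + 1) ^ (32 * T) by positivity), Real.log_pow]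
        push_cast
        rfl
  · calc |f U z - (f ∘ π) U z|
        ≤ 2 * opNorm (O z) * ∑ t ∈ Finset.range T, ‖U.1 t - (π U).1 t‖ :=
          abs_qloss_sub_qloss_le hV U.2 (π U).2 (hρ z).1 (hρ z).2
      _ ≤ 2 * C * ∑ _t ∈ Finset.range T, (32 / K : ℝ) := by
          have hC : 0 ≤ C := (norm_nonneg _).trans (hO z)
          gcongr with t ht
          · exact hO z
          · exact hπ U t (Finset.mem_range.1 ht)
      _ = 64 * C * T / K := by
          rw [Finset.sum_const, Finset.card_range, nsmul_eq_mul]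
          ring

theorem log_two_mul_dyadic_add_one_le (hT : 0 < T) (k : ℕ) :
    Real.log (2 * (2 ^ (k + 1) * (64 * T) : ℕ) + 1) ≤ 9 * (1 + Real.log T) * (k + 1) := by
  have hT' : (1 : ℝ) ≤ T := Nat.one_le_cast.2 hT
  have hlog : 0 ≤ Real.log T := Real.log_nonneg hT'
  have hpow : (1 : ℝ) ≤ 2 ^ k := one_le_pow₀ one_le_two
  have hlog_two : Real.log 2 ≤ 1 := by linarith [Real.log_two_lt_d9]
  calc Real.log (2 * (2 ^ (k + 1) * (64 * T) : ℕ) + 1) ≤ Real.log (2 ^ (9 + k) * T) := by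
        refine Real.log_le_log (by positivity) ?_
        push_cast
        rw [pow_succ, pow_add]
        nlinarith
    _ = (9 + k) * Real.log 2 + Real.log T := by
        rw [Real.log_mul (by positivity) (by positivity), Real.log_pow]
        push_cast
        rfl
    _ ≤ (9 + k) * 1 + Real.log T := by gcongr
    _ ≤ 9 * (1 + Real.log T) * (k + 1) := by
        nlinarith [mul_nonneg hlog k.cast_nonneg, k.cast_nonneg (α := ℝ)]

theorem exists_isUniformNet_qloss_dyadic (hT : 0 < T)
    (hV : ∀ s ≤ T, V s ∈ unitaryGroup (Fin 4 × Fin m) ℂ)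
    (hρm : ∀ p q, Measurable fun z => ρ z p q) (hρ : ∀ z, (ρ z).PosSemidef ∧ (ρ z).trace = 1)
    (hOm : ∀ p q, Measurable fun z => O z p q) (hO : ∀ z, opNorm (O z) ≤ C) (k : ℕ) :
    ∃ a, IsUniformNet (fun U : UnitaryGates T => qloss V T O ρ U.1) a
      (C * (1 / 2) ^ (k + 1)) (288 * (T * (1 + Real.log T)) * (k + 1)) := by
  obtain ⟨a, ha⟩ := exists_isUniformNet_qloss (K := 2 ^ (k + 1) * (64 * T)) (by positivity)
    hV hρm hρ hOm hO
  refine ⟨a, ha.mono (le_of_eq ?_) ?_⟩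
  · have hT' : (T : ℝ) ≠ 0 := Nat.cast_ne_zero.2 hT.ne'
    push_cast
    rw [div_pow, one_pow]
    field_simp
  · calc 32 * T * Real.log (2 * (2 ^ (k + 1) * (64 * T) : ℕ) + 1)
        ≤ 32 * T * (9 * (1 + Real.log T) * (k + 1)) := by
          gcongr
          exact log_two_mul_dyadic_add_one_le hT k
      _ = 288 * (T * (1 + Real.log T)) * (k + 1) := by ring

end MetricEntropy

theorem basic_qmlm_generalization_general {m T N : ℕ} (hT : 0 < T) (hN : 0 < N)
    {V : ℕ → Matrix (Fin 4 × Fin m) (Fin 4 × Fin m) ℂ}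
    (hV : ∀ s ≤ T, V s ∈ unitaryGroup (Fin 4 × Fin m) ℂ)
    {Z : Type*} [MeasurableSpace Z] {μ : Measure Z} [IsProbabilityMeasure μ]
    {ρ : Z → Matrix (Fin 4 × Fin m) (Fin 4 × Fin m) ℂ}
    (hρm : ∀ p q, Measurable fun z => ρ z p q) (hρ : ∀ z, (ρ z).PosSemidef ∧ (ρ z).trace = 1)
    {C : ℝ} (hC : 0 < C) {O : Z → Matrix (Fin 4 × Fin m) (Fin 4 × Fin m) ℂ}
    (hOm : ∀ p q, Measurable fun z => O z p q) (hO : ∀ z, opNorm (O z) ≤ C)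
    {δ : ℝ} (hδ : 0 < δ) (hδ₁ : δ ≤ 1) :
    ENNReal.ofReal (1 - δ) ≤ (Measure.pi fun _ : Fin N => μ) {S |
      ∀ U : ℕ → Matrix (Fin 4) (Fin 4) ℂ, (∀ t < T, U t ∈ unitaryGroup (Fin 4) ℂ) →
        generalizationGap μ (qloss V T O ρ U) S ≤
          204 * C * (Real.sqrt (T * (1 + Real.log T) / N) + Real.sqrt (Real.log (2 / δ) / N))} := by
  have hH : 0 ≤ 288 * (T * (1 + Real.log T)) := by
    have := Real.log_natCast_nonneg T
    positivity
  have hchain := ofReal_one_sub_le_measure_generalizationGap_le (μ := μ) hN hC hH hδ hδ₁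
    (fun _ : UnitaryGates T => measurable_qloss hOm hρm)
    (fun U z => (abs_qloss_le hV U.2 (hρ z).1 (hρ z).2).trans (hO z))
    (exists_isUniformNet_qloss_dyadic hT hV hρm hρ hOm hO)
  refine hchain.trans (measure_mono fun S hS U hU => (hS ⟨U, hU⟩).trans ?_)
  have hsqrt : Real.sqrt 288 ≤ 17 := Real.sqrt_le_iff.2 (by norm_num)
  rw [mul_div_assoc, Real.sqrt_mul (by norm_num)]
  calc 12 * C * (Real.sqrt 288 * Real.sqrt (T * (1 + Real.log T) / N) +
        Real.sqrt (Real.log (2 / δ) / N))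
      ≤ 12 * C * (17 * Real.sqrt (T * (1 + Real.log T) / N) +
        17 * Real.sqrt (Real.log (2 / δ) / N)) := by
        gcongr
        exact le_mul_of_one_le_left (Real.sqrt_nonneg _) (by norm_num)
    _ = 204 * C * (Real.sqrt (T * (1 + Real.log T) / N) + Real.sqrt (Real.log (2 / δ) / N)) := by
        ring

/-- Generalization bound `√(T(1+log T)/N) + √(log(2/δ)/N)` for a fixed-architecture basic
variational quantum machine learning model with `T` trainable 2-qubit gates. -/
theorem basic_qmlm_generalization :
    ∃ c : ℝ, 0 < c ∧
      ∀ (m T N : ℕ), 0 < m → 0 < T → 0 < N →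
      ∀ V : ℕ → Matrix (Fin 4 × Fin m) (Fin 4 × Fin m) ℂ,
        (∀ s ≤ T, V s ∈ Matrix.unitaryGroup (Fin 4 × Fin m) ℂ) →
      ∀ (Z : Type) (_ : MeasurableSpace Z) (μ : Measure Z), IsProbabilityMeasure μ →
      ∀ ρ : Z → Matrix (Fin 4 × Fin m) (Fin 4 × Fin m) ℂ,
        (∀ p q, Measurable fun z => ρ z p q) →
        (∀ z, (ρ z).PosSemidef ∧ (ρ z).trace = 1) →
      ∀ C : ℝ, 0 < C →
      ∀ O : Z → Matrix (Fin 4 × Fin m) (Fin 4 × Fin m) ℂ,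
        (∀ p q, Measurable fun z => O z p q) →
        (∀ z, (O z).IsHermitian ∧ opNorm (O z) ≤ C) →
      ∀ δ : ℝ, 0 < δ → δ < 1 →
        ENNReal.ofReal (1 - δ) ≤
          (Measure.pi fun _ : Fin N => μ) {S | ∀ U : ℕ → Matrix (Fin 4) (Fin 4) ℂ,
            (∀ t < T, U t ∈ Matrix.unitaryGroup (Fin 4) ℂ) →
            (∫ z, qloss V T O ρ U z ∂μ) - (1 / N) * ∑ i, qloss V T O ρ U (S i)
              ≤ c * C * (Real.sqrt (T * (1 + Real.log T) / N)
                  + Real.sqrt (Real.log (2 / δ) / N))} :=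
  ⟨204, by norm_num, fun _ _ _ _ hT hN _ hV _ _ _ _ _ hρm hρ _ hC _ hOm hO _ hδ hδ₁ =>
    basic_qmlm_generalization_general hT hN hV hρm hρ hC hOm (fun z => (hO z).2) hδ hδ₁.le⟩
end

section
/- Uniform deviation bound in terms of empirical Rademacher averages: let Z be a measurable space with probability measure μ, let Θ be a countable nonempty index set, let C > 0, and let f_θ : Z → ℝ (θ ∈ Θ) be measurable functions with |f_θ(z)| ≤ C for all θ and z. For a sample S = (z_1,…,z_N) ∈ Z^N define the empirical Rademacher average 𝔼_σ[sup_{θ∈Θ} (1/N) Σ_{i=1}^N σ_i f_θ(z_i)] := 2^{−N} Σ_{σ ∈ {−1,1}^N} sup_{θ∈Θ} (1/N) Σ_{i=1}^N σ_i f_θ(z_i). Then for every positive integer N and every δ ∈ (0,1), with probability at least 1 − δ over S drawn from μ^{⊗N}: sup_{θ∈Θ} ( ∫ f_θ dμ − (1/N) Σ_{i=1}^N f_θ(z_i) ) ≤ 2 𝔼_σ[sup_{θ∈Θ} (1/N) Σ_{i=1}^N σ_i f_θ(z_i)] + 3C √(2 log(2/δ)/N). -/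
open MeasureTheory

/-! The uniform deviation minus twice the empirical Rademacher average changes by at most `6C/N`
when one observation changes. McDiarmid's inequality, applied once to this combination rather than
separately to its two terms, keeps it below its mean plus `3C√(2 log(1/δ)/N)` with probability at
least `1 - δ`. Its mean is nonpositive by symmetrization: an independent ghost sample replaces the
true means by empirical ones, the joint law of the two samples is invariant under exchanging them
in any set of coordinates, and averaging over all exchanges produces the random signs.

McDiarmid's inequality follows by induction on the number of variables. The mean over all variables
but the first is sub-Gaussian by Hoeffding's lemma, the remainder is sub-Gaussian for every fixed
value of the first variable, and the parameters add up. -/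

open ProbabilityTheory
open scoped BigOperators NNReal

section Preliminaries

lemma abs_ciSup_sub_ciSup_le {κ : Type*} [Nonempty κ] {u v : κ → ℝ} {d : ℝ}
    (huv : ∀ k, |u k - v k| ≤ d) : |(⨆ k, u k) - ⨆ k, v k| ≤ d := by
  have hd : 0 ≤ d := (abs_nonneg _).trans (huv (Classical.arbitrary κ))
  have bddAbove_of : ∀ {u v : κ → ℝ}, (∀ k, |u k - v k| ≤ d) →
      BddAbove (Set.range v) → BddAbove (Set.range u) := by
    rintro u v huv ⟨M, hM⟩
    refine ⟨M + d, Set.forall_mem_range.2 fun k => ?_⟩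
    linarith [hM (Set.mem_range_self k), (abs_le.1 (huv k)).2]
  have hvu : ∀ k, |v k - u k| ≤ d := fun k => abs_sub_comm (u k) (v k) ▸ huv k
  have ciSup_le_add : ∀ {u v : κ → ℝ}, (∀ k, |u k - v k| ≤ d) → BddAbove (Set.range v) →
      ⨆ k, u k ≤ (⨆ k, v k) + d := fun huv hv => ciSup_le fun k => by
    linarith [le_ciSup hv k, (abs_le.1 (huv k)).2]
  by_cases hv : BddAbove (Set.range v)
  · have hu := bddAbove_of huv hv
    exact abs_sub_le_iff.2
      ⟨by linarith [ciSup_le_add huv hv], by linarith [ciSup_le_add hvu hu]⟩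
  · have hu : ¬BddAbove (Set.range u) := fun hu => hv (bddAbove_of hvu hu)
    simpa [Real.iSup_of_not_bddAbove hu, Real.iSup_of_not_bddAbove hv] using hd

lemma abs_sub_le_two_mul_of_abs_le {a b K : ℝ} (ha : |a| ≤ K) (hb : |b| ≤ K) : |a - b| ≤ 2 * K :=
  (abs_sub a b).trans (by linarith)

lemma abs_expect_le_of_forall_abs_le {κ : Type*} [Fintype κ] [Nonempty κ] {u : κ → ℝ} {K : ℝ}
    (hu : ∀ k, |u k| ≤ K) : |𝔼 k, u k| ≤ K :=
  (Finset.abs_expect_le _ _).trans (Finset.expect_le Finset.univ_nonempty fun k _ => hu k)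

variable {α β : Type*} [MeasurableSpace α] [MeasurableSpace β] {μ : Measure α} {ν : Measure β}

lemma measurable_expect {κ : Type*} [Fintype κ] {g : κ → α → ℝ} (hg : ∀ k, Measurable (g k)) :
    Measurable fun x => 𝔼 k, g k x := by
  simp only [Fintype.expect_eq_sum_div_card]
  fun_prop

lemma integral_expect {κ : Type*} [Fintype κ] {g : κ → α → ℝ} (hg : ∀ k, Integrable (g k) μ) :
    ∫ x, 𝔼 k, g k x ∂μ = 𝔼 k, ∫ x, g k x ∂μ := by
  simp only [Fintype.expect_eq_sum_div_card, integral_div, integral_finsetSum _ fun k _ => hg k]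

lemma integral_expect_apply {ι : Type*} [Fintype ι] {Ω : ι → Type*} [∀ i, MeasurableSpace (Ω i)]
    {μ : ∀ i, Measure (Ω i)} [∀ i, IsProbabilityMeasure (μ i)] {g : ∀ i, Ω i → ℝ}
    (hg : ∀ i, Integrable (g i) (μ i)) :
    ∫ S, 𝔼 i, g i (S i) ∂(Measure.pi μ) = 𝔼 i, ∫ z, g i z ∂(μ i) := by
  rw [integral_expect fun i => integrable_comp_eval (hg i)]
  exact Finset.expect_congr rfl fun i _ => integral_comp_eval (hg i).aestronglyMeasurable

lemma integral_comp_of_measurePreserving {T : α → β} (hT : MeasurePreserving T μ ν) {g : β → ℝ}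
    (hg : Measurable g) : ∫ x, g (T x) ∂μ = ∫ y, g y ∂ν := by
  rw [← hT.map_eq, integral_map hT.measurable.aemeasurable hg.aestronglyMeasurable]

lemma abs_integral_le_of_forall_abs_le [IsProbabilityMeasure μ] {g : α → ℝ} {K : ℝ}
    (hg : ∀ x, |g x| ≤ K) : |∫ x, g x ∂μ| ≤ K := by
  simpa using norm_integral_le_of_norm_le_const (μ := μ) (f := g) (ae_of_all μ hg)

lemma integrable_of_forall_abs_sub_le [IsFiniteMeasure μ] {g : α → ℝ} {d : ℝ} (hgm : Measurable g)
    (hg : ∀ x y, |g x - g y| ≤ d) : Integrable g μ := by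
  cases isEmpty_or_nonempty α with
  | inl h => simp [Measure.eq_zero_of_isEmpty μ]
  | inr h =>
    obtain ⟨y⟩ := h
    exact .of_bound hgm.aestronglyMeasurable (|g y| + d) <| ae_of_all μ fun x => by
      rw [Real.norm_eq_abs]
      linarith [abs_sub_abs_le_abs_sub (g x) (g y), hg x y]

end Preliminaries

section SubGaussian

variable {α β : Type*} [MeasurableSpace α] [MeasurableSpace β] {μ : Measure α} {ν : Measure β}

lemma hasSubgaussianMGF_of_forall_abs_sub_le [IsProbabilityMeasure μ] {g : α → ℝ} {d : ℝ}
    (hgm : Measurable g) (hg : ∀ x y, |g x - g y| ≤ d) :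
    HasSubgaussianMGF (fun x => g x - ∫ y, g y ∂μ) ((‖d‖₊ / 2) ^ 2) μ := by
  have : Nonempty α := nonempty_of_isProbabilityMeasure μ
  have hbdd : BddBelow (Set.range g) := ⟨g (Classical.arbitrary α) - d, Set.forall_mem_range.2
    fun x => by linarith [(abs_le.1 (hg (Classical.arbitrary α) x)).2]⟩
  have hIcc : ∀ x, g x ∈ Set.Icc (⨅ y, g y) ((⨅ y, g y) + d) := fun x => by
    have hle : g x - d ≤ ⨅ y, g y := le_ciInf fun y => by linarith [(abs_le.1 (hg x y)).2]
    exact ⟨ciInf_le hbdd x, by linarith⟩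
  simpa using hasSubgaussianMGF_of_mem_Icc hgm.aemeasurable (ae_of_all μ hIcc)

lemma hasSubgaussianMGF_add_of_forall_slice [SFinite μ] [SFinite ν] {X : α → ℝ} {Y : α × β → ℝ}
    {a b : ℝ≥0} (hX : HasSubgaussianMGF X a μ) (hYm : AEStronglyMeasurable Y (μ.prod ν))
    (hY : ∀ x, HasSubgaussianMGF (fun y => Y (x, y)) b ν) :
    HasSubgaussianMGF (fun p => X p.1 + Y p) (a + b) (μ.prod ν) := by
  have hmeas : ∀ t, AEStronglyMeasurable (fun p => Real.exp (t * (X p.1 + Y p))) (μ.prod ν) :=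
    fun t => Real.continuous_exp.comp_aestronglyMeasurable
      ((hX.aestronglyMeasurable.comp_fst.add hYm).const_mul t)
  have hexp : ∀ t x y, Real.exp (t * (X x + Y (x, y)))
      = Real.exp (t * X x) * Real.exp (t * Y (x, y)) := fun t x y => by
    rw [mul_add, Real.exp_add]
  have hslice : ∀ t x, ∫ y, Real.exp (t * (X x + Y (x, y))) ∂ν
      ≤ Real.exp (t * X x) * Real.exp (b * t ^ 2 / 2) := fun t x => by
    simp only [hexp, integral_const_mul]
    gcongr
    exact (hY x).mgf_le t
  have hdom : ∀ t, Integrable (fun x => Real.exp (t * X x) * Real.exp (b * t ^ 2 / 2)) μ :=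
    fun t => (hX.integrable_exp_mul t).mul_const _
  have hint : ∀ t, Integrable (fun p => Real.exp (t * (X p.1 + Y p))) (μ.prod ν) := fun t => by
    refine (integrable_prod_iff (hmeas t)).2 ⟨ae_of_all _ fun x => ?_, ?_⟩
    · simpa only [hexp] using ((hY x).integrable_exp_mul t).const_mul _
    · refine (hdom t).mono' (hmeas t).norm.integral_prod_right' (ae_of_all _ fun x => ?_)
      simp only [Real.norm_eq_abs, Real.abs_exp]
      rw [abs_of_nonneg (integral_nonneg fun y => (Real.exp_pos _).le)]
      exact hslice t x
  refine ⟨hint, fun t => ?_⟩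
  calc mgf (fun p => X p.1 + Y p) (μ.prod ν) t
      = ∫ x, ∫ y, Real.exp (t * (X x + Y (x, y))) ∂ν ∂μ := integral_prod _ (hint t)
    _ ≤ ∫ x, Real.exp (t * X x) * Real.exp (b * t ^ 2 / 2) ∂μ :=
        integral_mono (hint t).integral_prod_left (hdom t) (hslice t)
    _ = mgf X μ t * Real.exp (b * t ^ 2 / 2) := integral_mul_const _ _
    _ ≤ Real.exp (a * t ^ 2 / 2) * Real.exp (b * t ^ 2 / 2) := by gcongr; exact hX.mgf_le t
    _ = Real.exp ((a + b : ℝ≥0) * t ^ 2 / 2) := by rw [← Real.exp_add]; push_cast; ring_nf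

lemma hasSubgaussianMGF_sub_integral_of_measurePreserving {T : α → β} (hT : MeasurePreserving T μ ν)
    {g : β → ℝ} {a : ℝ≥0} (hgm : Measurable g)
    (h : HasSubgaussianMGF (fun x => g (T x) - ∫ x', g (T x') ∂μ) a μ) :
    HasSubgaussianMGF (fun y => g y - ∫ y', g y' ∂ν) a ν := by
  rw [integral_comp_of_measurePreserving hT hgm] at h
  have hm : Measurable fun y => g y - ∫ y', g y' ∂ν := hgm.sub_const _
  refine h.congr_identDistrib ⟨(hm.comp hT.measurable).aemeasurable, hm.aemeasurable, ?_⟩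
  rw [← hT.map_eq, Measure.map_map (hT.map_eq ▸ hm) hT.measurable, hT.map_eq]
  rfl

lemma hasSubgaussianMGF_prod_of_forall_slice [IsProbabilityMeasure μ] [IsProbabilityMeasure ν]
    {g : α × β → ℝ} {b : ℝ≥0} {d : ℝ} (hgm : Measurable g)
    (hosc : ∀ x x' y, |g (x, y) - g (x', y)| ≤ d)
    (hslice : ∀ x, HasSubgaussianMGF (fun y => g (x, y) - ∫ y', g (x, y') ∂ν) b ν) :
    HasSubgaussianMGF (fun p => g p - ∫ q, g q ∂(μ.prod ν)) ((‖d‖₊ / 2) ^ 2 + b) (μ.prod ν) := by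
  set h : α → ℝ := fun x => ∫ y, g (x, y) ∂ν
  set m : ℝ := ∫ x, h x ∂μ
  have hhm : Measurable h := hgm.stronglyMeasurable.integral_prod_right'.measurable
  have hslicei : ∀ x, Integrable (fun y => g (x, y)) ν := fun x =>
    ((hslice x).integrable.add (integrable_const (h x))).congr
      (ae_of_all _ fun y => sub_add_cancel _ _)
  have hhosc : ∀ x x', |h x - h x'| ≤ d := fun x x' => by
    rw [← integral_sub (hslicei x) (hslicei x')]
    exact abs_integral_le_of_forall_abs_le (hosc x x')
  have hsum : HasSubgaussianMGF (fun p => h p.1 - m + (g p - h p.1)) ((‖d‖₊ / 2) ^ 2 + b)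
      (μ.prod ν) :=
    hasSubgaussianMGF_add_of_forall_slice (hasSubgaussianMGF_of_forall_abs_sub_le hhm hhosc)
      (hgm.sub (hhm.comp measurable_fst)).aestronglyMeasurable hslice
  have hcentred : (fun p => h p.1 - m + (g p - h p.1)) = fun p => g p - m := by
    funext p
    ring
  rw [hcentred] at hsum
  have hgi : Integrable g (μ.prod ν) :=
    (hsum.integrable.add (integrable_const m)).congr (ae_of_all _ fun p => sub_add_cancel _ _)
  rwa [integral_prod g hgi]

end SubGaussian

/-- A function `g` of finitely many variables has bounded differences `c` if changing only the
`i`-th variable changes the value of `g` by at most `c i`; this is the hypothesis of McDiarmid's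
inequality. The change of variable is encoded by two points that agree away from `i`, so that no
decidable equality on the index type is needed. -/
def HasBoundedDifferences {ι : Type*} {Ω : ι → Type*} (c : ι → ℝ) (g : (∀ i, Ω i) → ℝ) : Prop :=
  ∀ i S S', (∀ j, j ≠ i → S j = S' j) → |g S - g S'| ≤ c i

namespace HasBoundedDifferences

section Operations

variable {ι : Type*} {Ω : ι → Type*} {c c' : ι → ℝ} {g g' : (∀ i, Ω i) → ℝ}

lemma sub (hg : HasBoundedDifferences c g) (hg' : HasBoundedDifferences c' g') :
    HasBoundedDifferences (fun i => c i + c' i) fun S => g S - g' S := fun i S S' h => by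
  rw [sub_sub_sub_comm]
  exact (abs_sub _ _).trans (add_le_add (hg i S S' h) (hg' i S S' h))

lemma const_mul (hg : HasBoundedDifferences c g) (r : ℝ) :
    HasBoundedDifferences (fun i => |r| * c i) fun S => r * g S := fun i S S' h => by
  rw [← mul_sub, abs_mul]
  exact mul_le_mul_of_nonneg_left (hg i S S' h) (abs_nonneg r)

lemma iSup {κ : Type*} [Nonempty κ] {g : κ → (∀ i, Ω i) → ℝ}
    (hg : ∀ k, HasBoundedDifferences c (g k)) : HasBoundedDifferences c fun S => ⨆ k, g k S :=
  fun i S S' h => abs_ciSup_sub_ciSup_le fun k => hg k i S S' h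

lemma expect {κ : Type*} [Fintype κ] [Nonempty κ] {g : κ → (∀ i, Ω i) → ℝ}
    (hg : ∀ k, HasBoundedDifferences c (g k)) : HasBoundedDifferences c fun S => 𝔼 k, g k S :=
  fun i S S' h => by
    rw [← Finset.expect_sub_distrib]
    exact abs_expect_le_of_forall_abs_le fun k => hg k i S S' h

lemma expect_apply [Fintype ι] {φ : ∀ i, Ω i → ℝ} {d : ℝ} (hφ : ∀ i z z', |φ i z - φ i z'| ≤ d) :
    HasBoundedDifferences (fun _ => d / Fintype.card ι) fun S => 𝔼 i, φ i (S i) :=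
  fun i S S' h => by
    have hsum : ∑ j, (φ j (S j) - φ j (S' j)) = φ i (S i) - φ i (S' i) :=
      Finset.sum_eq_single i (fun j _ hj => by rw [h j hj, sub_self]) (by simp)
    rw [← Finset.expect_sub_distrib, Fintype.expect_eq_sum_div_card, hsum, abs_div, Nat.abs_cast]
    exact div_le_div_of_nonneg_right (hφ i _ _) (Nat.cast_nonneg _)

lemma comp_piCongrLeft {ι' : Type*} (hg : HasBoundedDifferences c g) (e : ι' ≃ ι) :
    HasBoundedDifferences (fun i => c (e i)) fun S : ∀ i, Ω (e i) => g (e.piCongrLeft Ω S) :=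
  fun i S S' h => hg (e i) _ _ fun j hj => by
    obtain ⟨k, rfl⟩ := e.surjective j
    simpa only [Equiv.piCongrLeft_apply_apply] using h k fun hk => hj (hk ▸ rfl)

lemma abs_sub_le_sum [Fintype ι] (hg : HasBoundedDifferences c g) (S S' : ∀ i, Ω i) :
    |g S - g S'| ≤ ∑ i, c i := by
  classical
  suffices ∀ s : Finset ι, |g (s.piecewise S S') - g S'| ≤ ∑ i ∈ s, c i by
    simpa using this Finset.univ
  intro s
  induction s using Finset.induction_on with
  | empty => simp
  | insert i s hi ih =>
    rw [Finset.sum_insert hi]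
    refine (abs_sub_le _ (g (s.piecewise S S')) _).trans (add_le_add (hg i _ _ fun j hj => ?_) ih)
    rw [Finset.piecewise_insert, Function.update_of_ne hj]

end Operations

section McDiarmid

lemma integrable {ι : Type*} [Finite ι] {Ω : ι → Type*} [∀ i, MeasurableSpace (Ω i)]
    {P : Measure (∀ i, Ω i)} [IsFiniteMeasure P] {c : ι → ℝ} {g : (∀ i, Ω i) → ℝ}
    (hg : HasBoundedDifferences c g) (hgm : Measurable g) : Integrable g P :=
  have := Fintype.ofFinite ι
  integrable_of_forall_abs_sub_le hgm hg.abs_sub_le_sum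

lemma comp_insertNth {n : ℕ} {Ω : Fin (n + 1) → Type*} {c : Fin (n + 1) → ℝ}
    {g : (∀ i, Ω i) → ℝ} (hg : HasBoundedDifferences c g) (k : Fin (n + 1)) (z : Ω k) :
    HasBoundedDifferences (fun i => c (k.succAbove i))
      fun S : ∀ i, Ω (k.succAbove i) => g (k.insertNth z S) :=
  fun i S S' h => hg (k.succAbove i) _ _ fun j => by
    induction j using k.succAboveCases with
    | x => simp
    | p j =>
      intro hj
      simpa using h j fun hji => hj (hji ▸ rfl)

lemma hasSubgaussianMGF_fin {n : ℕ} {Ω : Fin n → Type*} [∀ i, MeasurableSpace (Ω i)]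
    (μ : ∀ i, Measure (Ω i)) [∀ i, IsProbabilityMeasure (μ i)] {c : Fin n → ℝ}
    {g : (∀ i, Ω i) → ℝ} (hg : HasBoundedDifferences c g) (hgm : Measurable g) :
    HasSubgaussianMGF (fun S => g S - ∫ S', g S' ∂(Measure.pi μ)) (∑ i, (‖c i‖₊ / 2) ^ 2)
      (Measure.pi μ) := by
  induction n with
  | zero =>
    have hconst : ∀ S, g S = g default := fun S => congrArg g (Subsingleton.elim _ _)
    simp [hconst]
  | succ n ih =>
    have hcons := (measurePreserving_piFinSuccAbove μ 0).symm
    have hgm' := hgm.comp hcons.measurable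
    rw [Fin.sum_univ_succAbove _ 0]
    refine hasSubgaussianMGF_sub_integral_of_measurePreserving hcons hgm <|
      hasSubgaussianMGF_prod_of_forall_slice hgm' (fun z z' S => hg 0 _ _ fun j hj => ?_) fun z =>
        ih _ (hg.comp_insertNth 0 z) (hgm'.comp measurable_prodMk_left)
    obtain ⟨i, rfl⟩ := Fin.exists_succAbove_eq hj
    exact (Fin.insertNth_apply_succAbove 0 z S i).trans
      (Fin.insertNth_apply_succAbove 0 z' S i).symm

theorem hasSubgaussianMGF {ι : Type*} [Fintype ι] {Ω : ι → Type*} [∀ i, MeasurableSpace (Ω i)]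
    (μ : ∀ i, Measure (Ω i)) [∀ i, IsProbabilityMeasure (μ i)] {c : ι → ℝ} {g : (∀ i, Ω i) → ℝ}
    (hg : HasBoundedDifferences c g) (hgm : Measurable g) :
    HasSubgaussianMGF (fun S => g S - ∫ S', g S' ∂(Measure.pi μ)) (∑ i, (‖c i‖₊ / 2) ^ 2)
      (Measure.pi μ) := by
  set e := (Fintype.equivFin ι).symm
  have he := measurePreserving_piCongrLeft μ e
  rw [← e.sum_comp]
  exact hasSubgaussianMGF_sub_integral_of_measurePreserving he hgm <|
    hasSubgaussianMGF_fin _ (hg.comp_piCongrLeft e) (hgm.comp he.measurable)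

theorem measureReal_ge_le {ι : Type*} [Fintype ι] {Ω : ι → Type*} [∀ i, MeasurableSpace (Ω i)]
    (μ : ∀ i, Measure (Ω i)) [∀ i, IsProbabilityMeasure (μ i)] {c : ι → ℝ} {g : (∀ i, Ω i) → ℝ}
    (hg : HasBoundedDifferences c g) (hgm : Measurable g) {ε : ℝ} (hε : 0 ≤ ε) :
    (Measure.pi μ).real {S | ε ≤ g S - ∫ S', g S' ∂(Measure.pi μ)}
      ≤ Real.exp (-2 * ε ^ 2 / ∑ i, c i ^ 2) := by
  refine ((hg.hasSubgaussianMGF μ hgm).measure_ge_le hε).trans_eq ?_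
  have hparam : 2 * ((∑ i, (‖c i‖₊ / 2) ^ 2 : ℝ≥0) : ℝ) = (∑ i, c i ^ 2) / 2 := by
    push_cast
    simp only [div_pow, Real.norm_eq_abs, sq_abs, ← Finset.sum_div]
    ring
  rw [hparam]
  congr 1
  rw [div_div_eq_mul_div]
  ring

theorem ofReal_one_sub_le_measure {ι : Type*} [Fintype ι] {Ω : ι → Type*}
    [∀ i, MeasurableSpace (Ω i)] (μ : ∀ i, Measure (Ω i)) [∀ i, IsProbabilityMeasure (μ i)]
    {c : ι → ℝ} {g : (∀ i, Ω i) → ℝ} (hg : HasBoundedDifferences c g) (hgm : Measurable g)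
    (hc : 0 < ∑ i, c i ^ 2) {δ : ℝ} (hδ0 : 0 < δ) (hδ1 : δ ≤ 1) :
    ENNReal.ofReal (1 - δ) ≤ Measure.pi μ {S | g S ≤ ∫ S', g S' ∂(Measure.pi μ)
      + √((∑ i, c i ^ 2) * Real.log (1 / δ) / 2)} := by
  set P := Measure.pi μ
  set ε : ℝ := √((∑ i, c i ^ 2) * Real.log (1 / δ) / 2)
  have hlog : 0 ≤ Real.log (1 / δ) := Real.log_nonneg (one_le_one_div hδ0 hδ1)
  have htail : P.real {S | ε ≤ g S - ∫ S', g S' ∂P} ≤ δ := by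
    refine (hg.measureReal_ge_le μ hgm (Real.sqrt_nonneg _)).trans_eq ?_
    rw [Real.sq_sqrt (by positivity), ← Real.exp_log hδ0, one_div, Real.log_inv, Real.log_exp]
    congr 1
    field_simp
  have hmeas : MeasurableSet {S | ε ≤ g S - ∫ S', g S' ∂P} :=
    measurableSet_le measurable_const (hgm.sub_const _)
  calc ENNReal.ofReal (1 - δ) ≤ ENNReal.ofReal (P.real {S | ε ≤ g S - ∫ S', g S' ∂P}ᶜ) := by
        rw [probReal_compl_eq_one_sub hmeas]
        gcongr
    _ = P {S | ε ≤ g S - ∫ S', g S' ∂P}ᶜ := ofReal_measureReal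
    _ ≤ P {S | g S ≤ ∫ S', g S' ∂P + ε} := measure_mono fun S (hS : ¬ε ≤ g S - ∫ S', g S' ∂P) =>
        sub_le_iff_le_add'.1 (not_le.1 hS).le

end McDiarmid

end HasBoundedDifferences

/-- The supremum over `θ` of the empirical means of `φ θ` on the sample `S`. The summands may
depend on the index of the observation, so that both the uniform deviation and the Rademacher
averages are of this form. -/
noncomputable def supEmpiricalMean {ι X Θ : Type*} [Fintype ι] (φ : Θ → ι → X → ℝ) (S : ι → X) :
    ℝ :=
  ⨆ θ, 𝔼 i, φ θ i (S i)

section SupEmpiricalMean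

variable {ι X Θ : Type*} [Fintype ι] {φ : Θ → ι → X → ℝ}

lemma measurable_supEmpiricalMean [MeasurableSpace X] [Countable Θ]
    (hφ : ∀ θ i, Measurable (φ θ i)) : Measurable (supEmpiricalMean φ) :=
  .iSup fun θ => measurable_expect fun i => (hφ θ i).comp (measurable_pi_apply i)

lemma hasBoundedDifferences_supEmpiricalMean [Nonempty Θ] {d : ℝ}
    (hφ : ∀ θ i x x', |φ θ i x - φ θ i x'| ≤ d) :
    HasBoundedDifferences (fun _ => d / Fintype.card ι) (supEmpiricalMean φ) :=
  .iSup fun θ => .expect_apply (hφ θ)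

lemma expect_le_supEmpiricalMean [Nonempty ι] {K : ℝ} (hφ : ∀ θ i x, |φ θ i x| ≤ K) (θ : Θ)
    (S : ι → X) : 𝔼 i, φ θ i (S i) ≤ supEmpiricalMean φ S :=
  le_ciSup (f := fun θ => 𝔼 i, φ θ i (S i)) ⟨K, Set.forall_mem_range.2 fun θ =>
    (abs_le.1 (abs_expect_le_of_forall_abs_le fun i => hφ θ i (S i))).2⟩ θ

lemma integrable_supEmpiricalMean [MeasurableSpace X] [Countable Θ] [Nonempty Θ]
    {P : Measure (ι → X)} [IsFiniteMeasure P] {K : ℝ} (hφm : ∀ θ i, Measurable (φ θ i))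
    (hφ : ∀ θ i x, |φ θ i x| ≤ K) : Integrable (supEmpiricalMean φ) P :=
  (hasBoundedDifferences_supEmpiricalMean fun θ i x x' =>
    abs_sub_le_two_mul_of_abs_le (hφ θ i x) (hφ θ i x')).integrable
      (measurable_supEmpiricalMean hφm)

end SupEmpiricalMean

/-- The uniform deviation of the means `∫ f θ` from the empirical means of `f θ`, for a sample `S`
whose `i`-th observation has law `μ i`. -/
noncomputable def uniformDeviation {ι Z Θ : Type*} [Fintype ι] [MeasurableSpace Z]
    (μ : ι → Measure Z) (f : Θ → Z → ℝ) (S : ι → Z) : ℝ :=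
  supEmpiricalMean (fun θ i z => ∫ y, f θ y ∂(μ i) - f θ z) S

/-- The value of a Rademacher sign, with `true` encoding `+1` and `false` encoding `-1`. -/
def rademacherSign (b : Bool) : ℝ := if b then 1 else -1

/-- The supremum over `θ` of the correlations of `f θ` on the sample `S` with the fixed sign
pattern `σ`. -/
noncomputable def signedSupMean {ι Z Θ : Type*} [Fintype ι] (f : Θ → Z → ℝ) (σ : ι → Bool)
    (S : ι → Z) : ℝ :=
  supEmpiricalMean (fun θ i z => rademacherSign (σ i) * f θ z) S

/-- The empirical Rademacher average of the family `f` on the sample `S`: the mean of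
`signedSupMean` over all sign patterns. -/
noncomputable def empiricalRademacher {ι Z Θ : Type*} [Fintype ι] [DecidableEq ι] (f : Θ → Z → ℝ)
    (S : ι → Z) : ℝ :=
  𝔼 σ : ι → Bool, signedSupMean f σ S

/-- The increments of the family `f` between an observation and its independent ghost copy. -/
def pairDifference {Z Θ : Type*} (f : Θ → Z → ℝ) (θ : Θ) (p : Z × Z) : ℝ := f θ p.1 - f θ p.2

lemma rademacherSign_not (b : Bool) : rademacherSign (!b) = -rademacherSign b := by
  cases b <;> simp [rademacherSign]

lemma abs_rademacherSign_mul (b : Bool) (r : ℝ) : |rademacherSign b * r| = |r| := by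
  cases b <;> simp [rademacherSign]

section Formulas

variable {ι Z Θ : Type*} [Fintype ι] (f : Θ → Z → ℝ) (S : ι → Z)

lemma uniformDeviation_const [Nonempty ι] [MeasurableSpace Z] (μ : Measure Z) :
    uniformDeviation (fun _ => μ) f S =
      ⨆ θ, (∫ z, f θ z ∂μ - (1 / Fintype.card ι) * ∑ i, f θ (S i)) := by
  simp only [uniformDeviation, supEmpiricalMean, Finset.expect_sub_distrib,
    Finset.expect_const Finset.univ_nonempty, Fintype.expect_eq_sum_div_card, one_div_mul_eq_div]

lemma empiricalRademacher_eq_sum [DecidableEq ι] :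
    empiricalRademacher f S = (2 ^ Fintype.card ι : ℝ)⁻¹ * ∑ σ : ι → Bool,
      ⨆ θ, (1 / Fintype.card ι) * ∑ i, rademacherSign (σ i) * f θ (S i) := by
  simp only [empiricalRademacher, signedSupMean, supEmpiricalMean, Fintype.expect_eq_sum_div_card,
    one_div_mul_eq_div, inv_mul_eq_div, Fintype.card_fun, Fintype.card_bool, Nat.cast_pow,
    Nat.cast_ofNat]

end Formulas

section Symmetrization

variable {ι Z Θ : Type*} [Fintype ι] {f : Θ → Z → ℝ}

lemma measurable_pairDifference [MeasurableSpace Z] (hf : ∀ θ, Measurable (f θ)) (θ : Θ) :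
    Measurable (pairDifference f θ) :=
  ((hf θ).comp measurable_fst).sub ((hf θ).comp measurable_snd)

lemma rademacherSign_mul_pairDifference (b : Bool) (θ : Θ) (p : Z × Z) :
    rademacherSign b * pairDifference f θ p =
      pairDifference f θ ((if b then id else Prod.swap) p) := by
  cases b <;> simp [rademacherSign, pairDifference]

lemma abs_pairDifference_le {C : ℝ} (hf : ∀ θ z, |f θ z| ≤ C) (θ : Θ) (p : Z × Z) :
    |pairDifference f θ p| ≤ 2 * C :=
  abs_sub_le_two_mul_of_abs_le (hf θ p.1) (hf θ p.2)

lemma hasBoundedDifferences_uniformDeviation [MeasurableSpace Z] [Nonempty Θ] {C : ℝ}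
    (μ : ι → Measure Z) (hf : ∀ θ z, |f θ z| ≤ C) :
    HasBoundedDifferences (fun _ => 2 * C / Fintype.card ι) (uniformDeviation μ f) :=
  hasBoundedDifferences_supEmpiricalMean fun θ _ z z' => by
    rw [sub_sub_sub_cancel_left]
    exact abs_sub_le_two_mul_of_abs_le (hf θ z') (hf θ z)

lemma hasBoundedDifferences_empiricalRademacher [DecidableEq ι] [Nonempty Θ] {C : ℝ}
    (hf : ∀ θ z, |f θ z| ≤ C) :
    HasBoundedDifferences (fun _ : ι => 2 * C / Fintype.card ι) (empiricalRademacher f) :=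
  .expect fun σ => hasBoundedDifferences_supEmpiricalMean fun θ i z z' => by
    rw [← mul_sub, abs_rademacherSign_mul]
    exact abs_sub_le_two_mul_of_abs_le (hf θ z) (hf θ z')

lemma signedSupMean_pairDifference_le [Nonempty ι] [Nonempty Θ] {C : ℝ}
    (hf : ∀ θ z, |f θ z| ≤ C) (σ : ι → Bool) (w : ι → Z × Z) :
    signedSupMean (pairDifference f) σ w ≤
      signedSupMean f σ (fun i => (w i).1) + signedSupMean f (fun i => !σ i) fun i => (w i).2 := by
  have hle : ∀ (τ : ι → Bool) S θ, 𝔼 i, rademacherSign (τ i) * f θ (S i) ≤ signedSupMean f τ S :=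
    fun τ S θ => expect_le_supEmpiricalMean
      (fun θ i z => (abs_rademacherSign_mul (τ i) _).trans_le (hf θ z)) θ S
  refine ciSup_le fun θ => (Eq.le ?_).trans (add_le_add (hle σ _ θ) (hle (fun i => !σ i) _ θ))
  rw [← Finset.expect_add_distrib]
  refine Finset.expect_congr rfl fun i _ => ?_
  simp only [pairDifference, rademacherSign_not]
  ring

variable [MeasurableSpace Z] [Countable Θ]

lemma measurable_uniformDeviation (μ : ι → Measure Z) (hf : ∀ θ, Measurable (f θ)) :
    Measurable (uniformDeviation μ f) :=
  measurable_supEmpiricalMean fun θ _ => (hf θ).const_sub _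

lemma measurable_signedSupMean (hf : ∀ θ, Measurable (f θ)) (σ : ι → Bool) :
    Measurable (signedSupMean f σ) :=
  measurable_supEmpiricalMean fun θ _ => (hf θ).const_mul _

lemma measurable_empiricalRademacher [DecidableEq ι] (hf : ∀ θ, Measurable (f θ)) :
    Measurable (empiricalRademacher f : (ι → Z) → ℝ) :=
  measurable_expect fun σ => measurable_signedSupMean hf σ

variable (μ : ι → Measure Z) [∀ i, IsProbabilityMeasure (μ i)]

lemma integral_supEmpiricalMean_pairDifference_eq_signedSupMean
    (hfm : ∀ θ, Measurable (f θ)) (σ : ι → Bool) :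
    ∫ w, supEmpiricalMean (fun θ _ => pairDifference f θ) w
        ∂(Measure.pi fun i => (μ i).prod (μ i)) =
      ∫ w, signedSupMean (pairDifference f) σ w
        ∂(Measure.pi fun i => (μ i).prod (μ i)) := by
  have hswap : MeasurePreserving (fun (w : ι → Z × Z) i => (if σ i then id else Prod.swap) (w i))
      (Measure.pi fun i => (μ i).prod (μ i)) (Measure.pi fun i => (μ i).prod (μ i)) := by
    refine measurePreserving_pi _ _ fun i => ?_
    cases σ i with
    | true => exact .id _
    | false => exact Measure.measurePreserving_swap
  rw [← integral_comp_of_measurePreserving hswap <| measurable_supEmpiricalMean fun θ _ =>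
    measurable_pairDifference hfm θ]
  refine congrArg _ <| funext fun w => iSup_congr fun θ => Finset.expect_congr rfl fun i _ => ?_
  exact (rademacherSign_mul_pairDifference (σ i) θ (w i)).symm

variable [Nonempty Θ] {C : ℝ}

lemma integrable_signedSupMean (hfm : ∀ θ, Measurable (f θ)) (hf : ∀ θ z, |f θ z| ≤ C)
    (σ : ι → Bool) : Integrable (signedSupMean f σ) (Measure.pi μ) :=
  integrable_supEmpiricalMean (fun θ _ => (hfm θ).const_mul _) fun θ i z =>
    (abs_rademacherSign_mul (σ i) _).trans_le (hf θ z)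

lemma uniformDeviation_le_integral_supEmpiricalMean_sub [Nonempty ι] (hfm : ∀ θ, Measurable (f θ))
    (hf : ∀ θ z, |f θ z| ≤ C) (S : ι → Z) :
    uniformDeviation μ f S ≤
      ∫ S', supEmpiricalMean (fun θ i z => f θ z - f θ (S i)) S' ∂(Measure.pi μ) := by
  have hm : ∀ θ i, Measurable fun z => f θ z - f θ (S i) := fun θ i => (hfm θ).sub_const _
  have hbd : ∀ θ i z, |f θ z - f θ (S i)| ≤ 2 * C := fun θ i z =>
    abs_sub_le_two_mul_of_abs_le (hf θ z) (hf θ (S i))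
  refine ciSup_le fun θ => ?_
  have hfi : ∀ i, Integrable (f θ) (μ i) := fun i =>
    .of_bound (hfm θ).aestronglyMeasurable C (ae_of_all _ (hf θ))
  have hmean : ∫ S', 𝔼 i, (f θ (S' i) - f θ (S i)) ∂(Measure.pi μ)
      = 𝔼 i, (∫ z, f θ z ∂(μ i) - f θ (S i)) := by
    rw [integral_expect_apply (g := fun i z => f θ z - f θ (S i)) fun i =>
      (hfi i).sub (integrable_const _)]
    simp only [integral_sub (hfi _) (integrable_const _), integral_const, probReal_univ, one_smul]
  rw [← hmean]
  refine integral_mono ?_ (integrable_supEmpiricalMean hm hbd) (expect_le_supEmpiricalMean hbd θ)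
  exact (HasBoundedDifferences.expect_apply fun i z z' =>
    abs_sub_le_two_mul_of_abs_le (hbd θ i z) (hbd θ i z')).integrable
    (measurable_expect fun i => (hm θ i).comp (measurable_pi_apply i))

lemma integral_uniformDeviation_le_integral_pairDifference [Nonempty ι]
    (hfm : ∀ θ, Measurable (f θ)) (hf : ∀ θ z, |f θ z| ≤ C) :
    ∫ S, uniformDeviation μ f S ∂(Measure.pi μ) ≤
      ∫ w, supEmpiricalMean (fun θ _ => pairDifference f θ) w
        ∂(Measure.pi fun i => (μ i).prod (μ i)) := by
  set D : (ι → Z × Z) → ℝ := supEmpiricalMean fun θ _ => pairDifference f θ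
  have hDm : Measurable D := measurable_supEmpiricalMean fun θ _ =>
    measurable_pairDifference hfm θ
  have hDi : Integrable D (Measure.pi fun i => (μ i).prod (μ i)) :=
    integrable_supEmpiricalMean (fun θ _ => measurable_pairDifference hfm θ) fun θ _ =>
      abs_pairDifference_le hf θ
  have hzip := (measurePreserving_arrowProdEquivProdArrow Z Z ι μ μ).symm
  have hzipi : Integrable (fun q => D ((MeasurableEquiv.arrowProdEquivProdArrow Z Z ι).symm q))
      ((Measure.pi μ).prod (Measure.pi μ)) := hzip.integrable_comp_of_integrable hDi
  rw [← integral_comp_of_measurePreserving hzip hDm, integral_prod_symm _ hzipi]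
  refine integral_mono ?_ hzipi.integral_prod_right fun S =>
    uniformDeviation_le_integral_supEmpiricalMean_sub μ hfm hf S
  exact (hasBoundedDifferences_uniformDeviation μ hf).integrable
    (measurable_uniformDeviation μ hfm)

lemma integral_uniformDeviation_le_add_signedSupMean [Nonempty ι] (hfm : ∀ θ, Measurable (f θ))
    (hf : ∀ θ z, |f θ z| ≤ C) (σ : ι → Bool) :
    ∫ S, uniformDeviation μ f S ∂(Measure.pi μ) ≤
      ∫ S, signedSupMean f σ S ∂(Measure.pi μ)
        + ∫ S, signedSupMean f (fun i => !σ i) S ∂(Measure.pi μ) := by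
  have hfst := measurePreserving_pi (fun i => (μ i).prod (μ i)) μ fun i =>
    measurePreserving_fst (μ := μ i) (ν := μ i)
  have hsnd := measurePreserving_pi (fun i => (μ i).prod (μ i)) μ fun i =>
    measurePreserving_snd (μ := μ i) (ν := μ i)
  have hWi := integrable_signedSupMean μ hfm hf
  have hfsti : Integrable (fun w : ι → Z × Z => signedSupMean f σ fun i => (w i).1)
      (Measure.pi fun i => (μ i).prod (μ i)) := hfst.integrable_comp_of_integrable (hWi σ)
  have hsndi : Integrable (fun w : ι → Z × Z => signedSupMean f (fun i => !σ i) fun i => (w i).2)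
      (Measure.pi fun i => (μ i).prod (μ i)) := hsnd.integrable_comp_of_integrable (hWi _)
  calc ∫ S, uniformDeviation μ f S ∂(Measure.pi μ)
      ≤ ∫ w, signedSupMean (pairDifference f) σ w
          ∂(Measure.pi fun i => (μ i).prod (μ i)) :=
        (integral_uniformDeviation_le_integral_pairDifference μ hfm hf).trans_eq
          (integral_supEmpiricalMean_pairDifference_eq_signedSupMean μ hfm σ)
    _ ≤ ∫ w, (signedSupMean f σ (fun i => (w i).1)
          + signedSupMean f (fun i => !σ i) fun i => (w i).2)
          ∂(Measure.pi fun i => (μ i).prod (μ i)) :=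
        integral_mono (integrable_signedSupMean _ (measurable_pairDifference hfm)
          (abs_pairDifference_le hf) σ) (hfsti.add hsndi) (signedSupMean_pairDifference_le hf σ)
    _ = _ := by
        rw [integral_add hfsti hsndi]
        exact congrArg₂ (· + ·)
          (integral_comp_of_measurePreserving hfst (measurable_signedSupMean hfm σ))
          (integral_comp_of_measurePreserving hsnd (measurable_signedSupMean hfm _))

theorem integral_uniformDeviation_le_two_mul_integral_empiricalRademacher [DecidableEq ι]
    [Nonempty ι] (hfm : ∀ θ, Measurable (f θ)) (hf : ∀ θ z, |f θ z| ≤ C) :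
    ∫ S, uniformDeviation μ f S ∂(Measure.pi μ) ≤
      2 * ∫ S, empiricalRademacher f S ∂(Measure.pi μ) := by
  set W : (ι → Bool) → ℝ := fun σ => ∫ S, signedSupMean f σ S ∂(Measure.pi μ)
  have hneg : 𝔼 σ : ι → Bool, W (fun i => !σ i) = 𝔼 σ, W σ :=
    Fintype.expect_equiv ((Equiv.refl ι).arrowCongr Equiv.boolNot) _ _ fun _ => rfl
  calc ∫ S, uniformDeviation μ f S ∂(Measure.pi μ)
      ≤ 𝔼 σ : ι → Bool, (W σ + W fun i => !σ i) :=
        Finset.le_expect Finset.univ_nonempty fun σ _ =>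
          integral_uniformDeviation_le_add_signedSupMean μ hfm hf σ
    _ = 2 * 𝔼 σ, W σ := by rw [Finset.expect_add_distrib, hneg, two_mul]
    _ = 2 * ∫ S, empiricalRademacher f S ∂(Measure.pi μ) := by
        rw [← integral_expect (integrable_signedSupMean μ hfm hf)]
        rfl

end Symmetrization

theorem uniform_deviation_rademacher_general {ι Z Θ : Type*} [Fintype ι] [DecidableEq ι]
    [Nonempty ι] [MeasurableSpace Z] (μ : ι → Measure Z) [∀ i, IsProbabilityMeasure (μ i)]
    [Countable Θ] [Nonempty Θ] {C : ℝ} (hC : 0 < C) {f : Θ → Z → ℝ}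
    (hmeas : ∀ θ, Measurable (f θ)) (hbd : ∀ θ z, |f θ z| ≤ C) {δ : ℝ} (hδ0 : 0 < δ)
    (hδ1 : δ ≤ 1) :
    ENNReal.ofReal (1 - δ) ≤ Measure.pi μ {S | uniformDeviation μ f S ≤
      2 * empiricalRademacher f S + 3 * C * √(2 * Real.log (1 / δ) / Fintype.card ι)} := by
  set P := Measure.pi μ
  have : (0 : ℝ) < Fintype.card ι := Nat.cast_pos.2 Fintype.card_pos
  have hdev := hasBoundedDifferences_uniformDeviation μ hbd
  have hrad := hasBoundedDifferences_empiricalRademacher (ι := ι) hbd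
  have hdevm := measurable_uniformDeviation μ hmeas
  have hradm := measurable_empiricalRademacher (ι := ι) hmeas
  have hmean : ∫ S, (uniformDeviation μ f S - 2 * empiricalRademacher f S) ∂P ≤ 0 := by
    rw [integral_sub (hdev.integrable hdevm) ((hrad.integrable hradm).const_mul 2),
      integral_const_mul, sub_nonpos]
    exact integral_uniformDeviation_le_two_mul_integral_empiricalRademacher μ hmeas hbd
  have hsq : ∑ _ : ι, (2 * C / Fintype.card ι + |2| * (2 * C / Fintype.card ι)) ^ 2
      = (6 * C) ^ 2 / Fintype.card ι := by
    rw [Finset.sum_const, Finset.card_univ, nsmul_eq_mul, abs_two]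
    field_simp
    ring
  have hradius : √((6 * C) ^ 2 / Fintype.card ι * Real.log (1 / δ) / 2)
      = 3 * C * √(2 * Real.log (1 / δ) / Fintype.card ι) := by
    rw [← Real.sqrt_sq (show 0 ≤ 3 * C by positivity), ← Real.sqrt_mul (sq_nonneg _)]
    congr 1
    field_simp
    ring
  have hconf := (hdev.sub (hrad.const_mul 2)).ofReal_one_sub_le_measure μ
    (hdevm.sub (hradm.const_mul 2)) (by rw [hsq]; positivity) hδ0 hδ1
  rw [hsq, hradius] at hconf
  refine hconf.trans (measure_mono fun S hS => ?_)
  have hS' : uniformDeviation μ f S - 2 * empiricalRademacher f S ≤ _ := hS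
  change uniformDeviation μ f S ≤ _
  linarith

/-- Uniform deviation bound in terms of empirical Rademacher averages: for a countable family of
measurable functions uniformly bounded by `C`, with probability at least `1 − δ` over an i.i.d.
sample of size `N`, the uniform deviation of empirical means from true means is bounded by twice
the empirical Rademacher average plus `3C√(2 log(2/δ)/N)`. The Rademacher average is written as
the exact average over all `2^N` sign patterns (`σ i = true` encodes the sign `+1`). -/
theorem uniform_deviation_rademacher {Z : Type*} [MeasurableSpace Z]
    (μ : Measure Z) [IsProbabilityMeasure μ]
    {Θ : Type*} [Countable Θ] [Nonempty Θ] (C : ℝ) (hC : 0 < C) (f : Θ → Z → ℝ)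
    (hmeas : ∀ θ, Measurable (f θ)) (hbd : ∀ θ z, |f θ z| ≤ C)
    (N : ℕ) (hN : 0 < N) (δ : ℝ) (hδ0 : 0 < δ) (hδ1 : δ < 1) :
    ENNReal.ofReal (1 - δ) ≤
      (Measure.pi fun _ : Fin N => μ) {S |
        (⨆ θ, ((∫ z, f θ z ∂μ) - (1 / N) * ∑ i, f θ (S i)))
          ≤ 2 * ((2 ^ N : ℝ)⁻¹ * ∑ σ : Fin N → Bool,
                ⨆ θ, (1 / N) * ∑ i, (if σ i then (1 : ℝ) else -1) * f θ (S i))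
            + 3 * C * Real.sqrt (2 * Real.log (2 / δ) / N)} := by
  have : NeZero N := ⟨hN.ne'⟩
  refine (uniform_deviation_rademacher_general (fun _ : Fin N => μ) hC hmeas hbd hδ0 hδ1.le).trans
    (measure_mono fun S hS => ?_)
  rw [Set.mem_ofPred_eq, uniformDeviation_const, empiricalRademacher_eq_sum, Fintype.card_fin] at hS
  have hradius : √(2 * Real.log (1 / δ) / N) ≤ √(2 * Real.log (2 / δ) / N) := by
    gcongr
    exact one_le_two
  exact hS.trans (add_le_add le_rfl (mul_le_mul_of_nonneg_left hradius (by positivity)))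
end
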